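/- arXiv:1811.03827 — 6 statements merged into one kernel-verified Lean document; each statement's English description precedes it below -/
import Mathlib

section
/- Let m ∈ ℕ and let μ₁,…,μ_m be finite Borel measures on ℝ satisfying μ₁(ℝ) = ⋯ = μ_m(ℝ) and ∫|x| dμ_l < ∞ for l = 1,…,m, and assume ((F_i−F_j)*(F_i−F_j))(x) ≥ 0 for all i,j and all x ∈ ℝ, where F_i is the distribution function of μ_i. If p ≺ q (q majorizes p) are m-tuples of non-negative integers, then W^p(μ₁,…,μ_m) ≼_cx W^q(μ₁,…,μ_m). -/
open MeasureTheory Set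

noncomputable def distFun (μ : Measure ℝ) (x : ℝ) : ℝ := (μ (Set.Iic x)).toReal

/-- Convolution of two real functions with respect to Lebesgue measure. -/
noncomputable def fconv (h₁ h₂ : ℝ → ℝ) (A : ℝ) : ℝ := ∫ t, h₁ t * h₂ (A - t)

/-- Convex order for finite Borel measures on ℝ. -/
def ConvexOrder (μ ν : Measure ℝ) : Prop :=
  ∀ φ : ℝ → ℝ, ConvexOn ℝ Set.univ φ → Integrable φ μ → Integrable φ ν →
    ∫ x, φ x ∂μ ≤ ∫ x, φ x ∂ν

/-- Usual stochastic order: `μ ≤ₛₜ ν`. -/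
def StochOrder (μ ν : Measure ℝ) : Prop :=
  μ Set.univ = ν Set.univ ∧ ∀ x : ℝ, distFun ν x ≤ distFun μ x

/-- k-fold convolution power of a measure. -/
noncomputable def convPow (μ : Measure ℝ) : ℕ → Measure ℝ
  | 0 => Measure.dirac 0
  | n + 1 => Measure.conv (convPow μ n) μ

/-- Convolution of a list of measures. -/
noncomputable def convList : List (Measure ℝ) → Measure ℝ
  | [] => Measure.dirac 0
  | m :: l => Measure.conv m (convList l)

/-- Convolution polynomial of measures associated with a multivariate polynomial
with non-negative coefficients. -/
noncomputable def convPoly {m : ℕ} (P : MvPolynomial (Fin m) ℝ) (μ : Fin m → Measure ℝ) :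
    Measure ℝ :=
  ∑ d ∈ P.support,
    ENNReal.ofReal (MvPolynomial.coeff d P) • convList (List.ofFn fun i => convPow (μ i) (d i))
/-- The nonincreasing rearrangement of an m-tuple of naturals. -/
def sortDesc {m : ℕ} (p : Fin m → ℕ) : Fin m → ℕ := fun i => p (Tuple.sort p i.rev)

/-- `Majorizes p q` means `p ≺ q`, i.e. `q` majorizes `p`. -/
def Majorizes {m : ℕ} (p q : Fin m → ℕ) : Prop :=
  (∑ l, sortDesc p l) = (∑ l, sortDesc q l) ∧
    ∀ k : Fin m, ∑ l ∈ Finset.Iic k, sortDesc p l ≤ ∑ l ∈ Finset.Iic k, sortDesc q l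

/-- Condition (S) for a pair `p ≺ q`. -/
def CondS {m : ℕ} (p q : Fin m → ℕ) : Prop :=
  ∃ l₁ l₂ : Fin m, l₁ < l₂ ∧ sortDesc q l₁ = sortDesc p l₁ + 1 ∧
    sortDesc q l₂ + 1 = sortDesc p l₂ ∧
    ∀ l, l ≠ l₁ → l ≠ l₂ → sortDesc q l = sortDesc p l

/-- The symmetrized monomial `W^p(x₁,…,x_m) = (1/m!) Σ_π Π_l x_{π(l)}^{p_l}`. -/
noncomputable def Wpoly {m : ℕ} (p : Fin m → ℕ) (x : Fin m → ℝ) : ℝ :=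
  ((m.factorial : ℝ))⁻¹ * ∑ π : Equiv.Perm (Fin m), ∏ l, x (π l) ^ p l

/-- The convolution polynomial of measures corresponding to `W^p`. -/
noncomputable def Wmeas {m : ℕ} (p : Fin m → ℕ) (μ : Fin m → Measure ℝ) : Measure ℝ :=
  ((m.factorial : ENNReal))⁻¹ •
    ∑ π : Equiv.Perm (Fin m), convList (List.ofFn fun l => convPow (μ (π l)) (p l))

section Muirhead

def symSum {R : Type*} [CommRing R] {m : ℕ} (x : Fin m → R) (p : Fin m → ℕ) : R :=
  ∑ π : Equiv.Perm (Fin m), ∏ l, x (π l) ^ p l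

lemma symSum_comp {R : Type*} [CommRing R] {m : ℕ} (x : Fin m → R) (p : Fin m → ℕ)
    (σ : Equiv.Perm (Fin m)) : symSum x (p ∘ σ) = symSum x p := by
  unfold symSum
  rw [← Equiv.sum_comp (Equiv.mulRight σ)]
  refine Finset.sum_congr rfl fun π _ => ?_
  rw [← Equiv.prod_comp σ (fun l => x (π l) ^ p l)]
  simp

def hs {m : ℕ} (p : Fin m → ℕ) (t : ℕ) : ℕ := ∑ l, (p l - t)

lemma hs_comp {m : ℕ} (p : Fin m → ℕ) (σ : Equiv.Perm (Fin m)) (t : ℕ) :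
    hs (p ∘ σ) t = hs p t := by
  unfold hs
  exact Equiv.sum_comp σ (fun l => p l - t)

lemma split_sum {m : ℕ} {M : Type*} [AddCommMonoid M] (g : Fin m → M) {i j : Fin m} (h : i ≠ j) :
    ∑ l, g l = g i + g j + ∑ l ∈ (Finset.univ.erase i).erase j, g l := by
  rw [add_assoc, Finset.add_sum_erase _ _ (by simp [h.symm]), Finset.add_sum_erase _ _ (by simp)]

lemma split_prod {m : ℕ} {M : Type*} [CommMonoid M] (g : Fin m → M) {i j : Fin m} (h : i ≠ j) :
    ∏ l, g l = g i * g j * ∏ l ∈ (Finset.univ.erase i).erase j, g l := by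
  rw [mul_assoc, Finset.mul_prod_erase _ _ (by simp [h.symm]), Finset.mul_prod_erase _ _ (by simp)]

lemma hs_succ {m : ℕ} (p : Fin m → ℕ) (t : ℕ) :
    hs p t + hs p (t + 2) = 2 * hs p (t + 1) + (Finset.univ.filter fun l => p l = t + 1).card := by
  unfold hs
  rw [Finset.card_filter, Finset.mul_sum, ← Finset.sum_add_distrib, ← Finset.sum_add_distrib]
  refine Finset.sum_congr rfl fun l _ => ?_
  split_ifs <;> omega

lemma hs_zero {m : ℕ} (p : Fin m → ℕ) :
    hs p 0 + (Finset.univ.filter fun l => p l = 0).card = hs p 1 + m := by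
  unfold hs
  have : m = ∑ l : Fin m, 1 := by simp
  refine Eq.trans ?_ (congrArg (fun z => ∑ l, (p l - 1) + z) this.symm)
  rw [Finset.card_filter, ← Finset.sum_add_distrib, ← Finset.sum_add_distrib]
  refine Finset.sum_congr rfl fun l _ => ?_
  split_ifs <;> omega

lemma hs_large {m : ℕ} (p : Fin m → ℕ) (t : ℕ) (h : hs p 0 ≤ t) : hs p t = 0 := by
  unfold hs at *
  refine Finset.sum_eq_zero fun l _ => ?_
  have := Finset.single_le_sum (f := fun l => p l - 0) (fun _ _ => Nat.zero_le _) (Finset.mem_univ l)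
  omega

lemma exists_perm_of_hs {m : ℕ} (p q : Fin m → ℕ) (h : ∀ t, hs p t = hs q t) :
    ∃ σ : Equiv.Perm (Fin m), q ∘ σ = p := by
  have hc : ∀ c, (Finset.univ.filter fun l => p l = c).card
      = (Finset.univ.filter fun l => q l = c).card := by
    intro c
    rcases c with _ | c
    · have h1 := hs_zero p
      have h2 := hs_zero q
      have := h 0
      have := h 1
      omega
    · have h1 := hs_succ p c
      have h2 := hs_succ q c
      have := h c
      have := h (c+1)
      have := h (c+2)
      omega
  have e : ∀ c, {a // p a = c} ≃ {a // q a = c} := fun c =>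
    Fintype.equivOfCardEq (by rw [Fintype.card_subtype, Fintype.card_subtype]; exact hc c)
  exact ⟨Equiv.ofFiberEquiv e, funext fun a => Equiv.ofFiberEquiv_map e a⟩

lemma pair_step {R : Type*} [CommRing R] {m : ℕ} (L : R →+ ℝ) (x : Fin m → R)
    (hL : ∀ i j, ∀ g ∈ Submonoid.closure (range x), 0 ≤ L ((x i - x j) ^ 2 * g))
    (q : Fin m → ℕ) (i j : Fin m) (u n : ℕ) (hij : i ≠ j) (hi : q i = u + n + 2) (hj : q j = u) :
    L (symSum x (Function.update (Function.update q i (u + n + 1)) j (u + 1)))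
      ≤ L (symSum x q) := by
  set q' := Function.update (Function.update q i (u + n + 1)) j (u + 1) with hq'
  have hi' : q' i = u + n + 1 := by simp [hq', hij]
  have hj' : q' j = u + 1 := by simp [hq']
  have hr' : ∀ l ∈ (Finset.univ.erase i).erase j, q' l = q l := by
    intro l hl
    simp only [Finset.mem_erase] at hl
    simp [hq', hl.1, hl.2.1]
  have hdouble : ∀ r : Fin m → ℕ, symSum x r + symSum x r
      = ∑ π : Equiv.Perm (Fin m), ((∏ l, x (π l) ^ r l) + ∏ l, x ((π * Equiv.swap i j) l) ^ r l) := by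
    intro r
    rw [Finset.sum_add_distrib]
    congr 1
    exact (Equiv.sum_comp (Equiv.mulRight (Equiv.swap i j))
      (fun π : Equiv.Perm (Fin m) => ∏ l, x (π l) ^ r l)).symm
  have key : 0 ≤ L ((symSum x q + symSum x q) - (symSum x q' + symSum x q')) := by
    rw [hdouble, hdouble, ← Finset.sum_sub_distrib, map_sum]
    refine Finset.sum_nonneg fun π _ => ?_
    set a := x (π i)
    set b := x (π j)
    set S := (Finset.univ.erase i).erase j
    set C := ∏ l ∈ S, x (π l) ^ q l
    have e1 : ∏ l, x (π l) ^ q l = a ^ (u+n+2) * b ^ u * C := by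
      rw [split_prod _ hij, hi, hj]
    have e2 : ∏ l, x (π l) ^ q' l = a ^ (u+n+1) * b ^ (u+1) * C := by
      rw [split_prod _ hij, hi', hj']
      congr 1
      exact Finset.prod_congr rfl fun l hl => by rw [hr' l hl]
    have hsw : ∀ l ∈ S, (π * Equiv.swap i j) l = π l := by
      intro l hl
      simp only [S, Finset.mem_erase] at hl
      simp [Equiv.swap_apply_of_ne_of_ne hl.2.1 hl.1]
    have e3 : ∏ l, x ((π * Equiv.swap i j) l) ^ q l = b ^ (u+n+2) * a ^ u * C := by
      rw [split_prod _ hij, hi, hj]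
      congr 1
      · simp [a, b]
      · exact Finset.prod_congr rfl fun l hl => by rw [hsw l hl]
    have e4 : ∏ l, x ((π * Equiv.swap i j) l) ^ q' l = b ^ (u+n+1) * a ^ (u+1) * C := by
      rw [split_prod _ hij, hi', hj']
      congr 1
      · simp [a, b]
      · exact Finset.prod_congr rfl fun l hl => by rw [hsw l hl, hr' l hl]
    rw [e1, e2, e3, e4]
    have hg := geom_sum₂_mul a b (n+1)
    have : (a ^ (u + n + 2) * b ^ u * C + b ^ (u + n + 2) * a ^ u * C -
        (a ^ (u + n + 1) * b ^ (u + 1) * C + b ^ (u + n + 1) * a ^ (u + 1) * C))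
        = ∑ k ∈ Finset.range (n+1), (a - b)^2 * (a ^ k * b ^ (n + 1 - 1 - k) * (a^u * b^u * C)) := by
      rw [← Finset.mul_sum, ← Finset.sum_mul]
      linear_combination (- (a - b) * a^u * b^u * C) * hg
    rw [this, map_sum]
    refine Finset.sum_nonneg fun k _ => hL _ _ _ ?_
    have hx : ∀ l, x l ∈ Submonoid.closure (range x) := fun l =>
      Submonoid.subset_closure ⟨l, rfl⟩
    refine mul_mem (mul_mem (pow_mem (hx _) _) (pow_mem (hx _) _))
      (mul_mem (mul_mem (pow_mem (hx _) _) (pow_mem (hx _) _)) ?_)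
    exact prod_mem fun l _ => pow_mem (hx _) _
  rw [map_sub, map_add, map_add] at key
  linarith

lemma muirhead_hs {R : Type*} [CommRing R] {m : ℕ} (L : R →+ ℝ) (x : Fin m → R)
    (hL : ∀ i j, ∀ g ∈ Submonoid.closure (range x), 0 ≤ L ((x i - x j) ^ 2 * g))
    (p : Fin m → ℕ) (N : ℕ) : ∀ (q : Fin m → ℕ), ∑ l, q l ^ 2 = N →
    hs p 0 = hs q 0 → (∀ t, hs p t ≤ hs q t) → L (symSum x p) ≤ L (symSum x q) := by
  induction N using Nat.strong_induction_on with
  | _ N ih =>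
  intro q hN h0 hle
  by_cases hall : ∀ t, hs p t = hs q t
  · obtain ⟨σ, rfl⟩ := exists_perm_of_hs p q hall
    rw [symSum_comp]
  push Not at hall
  obtain ⟨t0, ht0⟩ := hall
  have hex : ∃ v, t0 ≤ v ∧ hs p v = hs q v := by
    refine ⟨t0 + hs p 0, by omega, ?_⟩
    rw [hs_large p _ (by omega), hs_large q _ (by omega)]
  obtain ⟨v, ⟨hv0, hv⟩, hvmin⟩ : ∃ v, (t0 ≤ v ∧ hs p v = hs q v) ∧
      ∀ w < v, ¬ (t0 ≤ w ∧ hs p w = hs q w) := by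
    classical exact ⟨Nat.find hex, Nat.find_spec hex, fun w hw => Nat.find_min hex hw⟩
  obtain ⟨u, hut, hu, humax⟩ : ∃ u, u ≤ t0 ∧ hs p u = hs q u ∧
      ∀ w, u < w → w ≤ t0 → hs p w ≠ hs q w := by
    classical
    refine ⟨Nat.findGreatest (fun w => hs p w = hs q w) t0, Nat.findGreatest_le _,
      Nat.findGreatest_spec (P := fun w => hs p w = hs q w) (Nat.zero_le t0) h0, ?_⟩
    intro w h1 h2
    exact Nat.findGreatest_is_greatest (P := fun w => hs p w = hs q w) h1 h2
  have hut' : u < t0 := lt_of_le_of_ne hut (by rintro rfl; exact ht0 hu)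
  have hvt' : t0 < v := lt_of_le_of_ne hv0 (by rintro rfl; exact ht0 hv)
  have hstrict : ∀ w, u < w → w < v → hs p w < hs q w := by
    intro w h1 h2
    refine lt_of_le_of_ne (hle w) ?_
    rcases le_total w t0 with h | h
    · exact humax w h1 h
    · exact fun h' => hvmin w h2 ⟨h, h'⟩
  have hj : ∃ j, q j = u := by
    have : 0 < (Finset.univ.filter fun l => q l = u).card := by
      have h1 := hstrict (u+1) (by omega) (by omega)
      rcases u with _ | u
      · have := hs_zero p
        have := hs_zero q
        simp only [Nat.zero_add] at *
        omega
      · have := hs_succ p u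
        have := hs_succ q u
        have := hle u
        have e : u + 1 + 1 = u + 2 := rfl
        rw [e] at h1
        omega
    obtain ⟨j, hj⟩ := Finset.card_pos.mp this
    exact ⟨j, by simpa using hj⟩
  have hi : ∃ i, q i = v := by
    have : 0 < (Finset.univ.filter fun l => q l = v).card := by
      have h1 := hstrict (v-1) (by omega) (by omega)
      obtain ⟨w, rfl⟩ : ∃ w, v = w + 1 := ⟨v - 1, by omega⟩
      have := hs_succ p w
      have := hs_succ q w
      have := hle (w+2)
      simp only [Nat.add_sub_cancel] at h1
      omega
    obtain ⟨j, hj⟩ := Finset.card_pos.mp this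
    exact ⟨j, by simpa using hj⟩
  obtain ⟨j, hj⟩ := hj
  obtain ⟨i, hi⟩ := hi
  obtain ⟨n, rfl⟩ : ∃ n, v = u + n + 2 := ⟨v - u - 2, by omega⟩
  have hij : i ≠ j := by rintro rfl; omega
  refine le_trans ?_ (pair_step L x hL q i j u n hij hi hj)
  set q' := Function.update (Function.update q i (u + n + 1)) j (u + 1) with hq'
  have hi' : q' i = u + n + 1 := by simp [hq', hij]
  have hj' : q' j = u + 1 := by simp [hq']
  have hr' : ∀ l ∈ (Finset.univ.erase i).erase j, q' l = q l := by
    intro l hl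
    simp only [Finset.mem_erase] at hl
    simp [hq', hl.1, hl.2.1]
  have hs' : ∀ f : ℕ → ℕ, ∑ l, f (q' l) + f (u + n + 2) + f u
      = ∑ l, f (q l) + f (u + n + 1) + f (u + 1) := by
    intro f
    rw [split_sum _ hij, split_sum (fun l => f (q l)) hij, hi, hj, hi', hj',
      Finset.sum_congr rfl fun l hl => by rw [hr' l hl]]
    ring
  have hh : ∀ t, hs q' t + ((u+n+2) - t) + (u - t) = hs q t + ((u+n+1) - t) + ((u+1) - t) := fun t =>
    hs' (fun a => a - t)
  refine ih (∑ l, q' l ^ 2) ?_ q' rfl ?_ ?_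
  · have := hs' (fun a => a ^ 2)
    rw [hN] at this
    nlinarith
  · have := hh 0
    omega
  · intro t
    have h1 := hh t
    have h2 := hle t
    by_cases ht : u < t ∧ t < u + n + 2
    · have := hstrict t ht.1 ht.2
      omega
    · omega

lemma sortDesc_eq {m : ℕ} (p : Fin m → ℕ) :
    sortDesc p = p ∘ ((Fin.revPerm.trans (Tuple.sort p) : Equiv.Perm (Fin m))) := by
  funext i
  simp [sortDesc]

lemma sortDesc_antitone {m : ℕ} (p : Fin m → ℕ) : Antitone (sortDesc p) := by
  intro a b hab
  exact Tuple.monotone_sort p (Fin.rev_le_rev.mpr hab)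

lemma hs_le_of_majorizes {m : ℕ} (p q : Fin m → ℕ) (h : Majorizes p q) (t : ℕ) :
    hs p t ≤ hs q t := by
  have ep : hs p t = hs (sortDesc p) t := by rw [sortDesc_eq, hs_comp]
  have eq : hs q t = hs (sortDesc q) t := by rw [sortDesc_eq, hs_comp]
  rw [ep, eq]
  have hanti := sortDesc_antitone p
  obtain ⟨-, h2⟩ := h
  set P := sortDesc p
  set Q := sortDesc q
  by_cases hne : (Finset.univ.filter fun l => t < P l).Nonempty
  · set k := (Finset.univ.filter fun l => t < P l).max' hne
    have hk : t < P k := by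
      have := Finset.max'_mem _ hne
      simpa using this
    have hk2 : ∀ l, k < l → P l ≤ t := by
      intro l hl
      by_contra hc
      have := Finset.le_max' (Finset.univ.filter fun l => t < P l) l (by simpa using hc)
      exact absurd hl (not_lt.mpr this)
    have e1 : hs P t + ∑ l ∈ Finset.Iic k, t = ∑ l ∈ Finset.Iic k, P l := by
      have : hs P t = ∑ l ∈ Finset.Iic k, (P l - t) := by
        unfold hs
        symm
        refine Finset.sum_subset (Finset.subset_univ _) fun l _ hl => ?_
        have := hk2 l (by simpa using hl)
        omega
      rw [this, ← Finset.sum_add_distrib]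
      refine Finset.sum_congr rfl fun l hl => ?_
      have := hanti (Finset.mem_Iic.mp hl)
      omega
    have e2 : ∑ l ∈ Finset.Iic k, Q l ≤ hs Q t + ∑ l ∈ Finset.Iic k, t := by
      have : ∑ l ∈ Finset.Iic k, (Q l - t) ≤ hs Q t :=
        Finset.sum_le_sum_of_subset (Finset.subset_univ _)
      refine le_trans ?_ (Nat.add_le_add_right this _)
      rw [← Finset.sum_add_distrib]
      refine Finset.sum_le_sum fun l hl => ?_
      omega
    have := h2 k
    omega
  · have : hs P t = 0 := by
      unfold hs
      refine Finset.sum_eq_zero fun l _ => ?_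
      rw [Finset.not_nonempty_iff_eq_empty, Finset.filter_eq_empty_iff] at hne
      have := hne (Finset.mem_univ l)
      omega
    omega

lemma muirhead {R : Type*} [CommRing R] {m : ℕ} (L : R →+ ℝ) (x : Fin m → R)
    (hL : ∀ i j, ∀ g ∈ Submonoid.closure (range x), 0 ≤ L ((x i - x j) ^ 2 * g))
    (p q : Fin m → ℕ) (h : Majorizes p q) : L (symSum x p) ≤ L (symSum x q) := by
  refine muirhead_hs L x hL p _ q rfl ?_ (hs_le_of_majorizes p q h)
  have ep : hs p 0 = hs (sortDesc p) 0 := by rw [sortDesc_eq, hs_comp]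
  have eq : hs q 0 = hs (sortDesc q) 0 := by rw [sortDesc_eq, hs_comp]
  rw [ep, eq]
  simpa [hs] using h.1

end Muirhead

section ConvexRep

noncomputable def hk (a x : ℝ) : ENNReal :=
  if 0 < a then ENNReal.ofReal (x - a) else ENNReal.ofReal (a - x)

lemma convex_int (φ : ℝ → ℝ) (hφ : ConvexOn ℝ Set.univ φ) :
    ∃ S : StieltjesFunction ℝ, ∀ a b : ℝ, a ≤ b → φ b - φ a = ∫ u in a..b, S u := by
  have hmono : Monotone (fun x => derivWithin φ (Ioi x) x) := by
    have := hφ.monotoneOn_rightDeriv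
    simpa [monotoneOn_univ] using this
  refine ⟨hmono.stieltjesFunction, fun a b hab => ?_⟩
  have hcont : Continuous φ := by
    have := hφ.continuousOn_interior
    simpa [continuousOn_univ] using this
  rw [← intervalIntegral.integral_eq_sub_of_hasDeriv_right_of_le hab hcont.continuousOn
    (f' := fun x => derivWithin φ (Ioi x) x)
    (fun x _ => hφ.hasDerivWithinAt_rightDeriv_of_mem_interior (by simp))
    hmono.intervalIntegrable]
  refine intervalIntegral.integral_congr_ae ?_
  have hc := hmono.countable_not_continuousAt
  have := hc.ae_notMem volume
  filter_upwards [this] with x hx _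
  simp only [not_not] at hx
  rw [hmono.stieltjesFunction_eq]
  exact ((hmono.continuousWithinAt_Ioi_iff_rightLim_eq).1 hx.continuousWithinAt).symm

lemma convex_rep (φ : ℝ → ℝ) (hφ : ConvexOn ℝ Set.univ φ) :
    ∃ (S : StieltjesFunction ℝ) (s : ℝ), ∀ x, 0 ≤ φ x - φ 0 - s * x ∧
      ENNReal.ofReal (φ x - φ 0 - s * x) = ∫⁻ a, hk a x ∂S.measure := by
  obtain ⟨S, hS⟩ := convex_int φ hφ
  refine ⟨S, S 0, fun x => ?_⟩
  have hand : ∀ P Q : ℝ × ℝ → Prop, MeasurableSet {z | P z} → MeasurableSet {z | Q z} →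
      MeasurableSet {z | P z ∧ Q z} := fun P Q h1 h2 => h1.inter h2
  have hII : ∀ a b : ℝ, IntervalIntegrable S volume a b := fun a b => S.mono.intervalIntegrable
  rcases le_total 0 x with hx | hx
  · have e : φ x - φ 0 - S 0 * x = ∫ u in Ioc 0 x, (S u - S 0) := by
      rw [hS 0 x hx, ← intervalIntegral.integral_of_le hx, intervalIntegral.integral_sub (hII _ _)
        (by simp)]
      simp [mul_comm]
    have hnn : ∀ᵐ u ∂(volume.restrict (Ioc 0 x)), 0 ≤ S u - S 0 := by
      filter_upwards [ae_restrict_mem measurableSet_Ioc] with u hu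
      exact sub_nonneg.mpr (S.mono hu.1.le)
    have hint : Integrable (fun u => S u - S 0) (volume.restrict (Ioc 0 x)) := by
      have := (hII 0 x).sub (intervalIntegrable_const (c := S 0))
      exact (intervalIntegrable_iff_integrableOn_Ioc_of_le hx).1 this
    refine ⟨by rw [e]; exact integral_nonneg_of_ae hnn, ?_⟩
    rw [e, ofReal_integral_eq_lintegral_ofReal hint hnn]
    set E : Set (ℝ × ℝ) := {z | 0 < z.2 ∧ z.2 ≤ z.1 ∧ z.1 ≤ x} with hE
    have hEm : MeasurableSet E := by
      refine hand _ _ (measurableSet_lt (by fun_prop) (by fun_prop)) (hand _ _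
        (measurableSet_le (by fun_prop) (by fun_prop)) (measurableSet_le (by fun_prop) (by fun_prop)))
    have h1 : (volume.prod S.measure) E = ∫⁻ u in Ioc 0 x, ENNReal.ofReal (S u - S 0) := by
      rw [Measure.prod_apply hEm, ← lintegral_indicator measurableSet_Ioc]
      refine lintegral_congr fun u => ?_
      by_cases hu : u ∈ Ioc 0 x
      · rw [indicator_of_mem hu, ← S.measure_Ioc]
        congr 1
        ext a
        simp [hE, hu.2]
      · rw [indicator_of_notMem hu]
        convert measure_empty (μ := S.measure)
        ext a
        simp only [hE, mem_preimage, mem_ofPred_eq, mem_empty_iff_false, iff_false]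
        rintro ⟨h1, h2, h3⟩
        exact hu ⟨by linarith, h3⟩
    rw [← h1, Measure.prod_apply_symm hEm]
    refine lintegral_congr fun a => ?_
    unfold hk
    split_ifs with ha
    · rw [← Real.volume_Icc]
      congr 1
      ext u
      simp [hE, ha]
    · rw [ENNReal.ofReal_of_nonpos (by linarith)]
      convert measure_empty (μ := (volume : Measure ℝ))
      ext u
      simp [hE, ha]
  · have e : φ x - φ 0 - S 0 * x = ∫ u in Ioc x 0, (S 0 - S u) := by
      rw [← intervalIntegral.integral_of_le hx, intervalIntegral.integral_sub (by simp) (hII _ _),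
        ← hS x 0 hx]
      simp
      ring
    have hnn : ∀ᵐ u ∂(volume.restrict (Ioc x 0)), 0 ≤ S 0 - S u := by
      filter_upwards [ae_restrict_mem measurableSet_Ioc] with u hu
      exact sub_nonneg.mpr (S.mono hu.2)
    have hint : Integrable (fun u => S 0 - S u) (volume.restrict (Ioc x 0)) := by
      have := (intervalIntegrable_const (c := S 0)).sub (hII x 0)
      exact (intervalIntegrable_iff_integrableOn_Ioc_of_le hx).1 this
    refine ⟨by rw [e]; exact integral_nonneg_of_ae hnn, ?_⟩
    rw [e, ofReal_integral_eq_lintegral_ofReal hint hnn]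
    set E : Set (ℝ × ℝ) := {z | z.2 ≤ 0 ∧ z.1 < z.2 ∧ x < z.1} with hE
    have hEm : MeasurableSet E := by
      refine hand _ _ (measurableSet_le (by fun_prop) (by fun_prop)) (hand _ _
        (measurableSet_lt (by fun_prop) (by fun_prop)) (measurableSet_lt (by fun_prop) (by fun_prop)))
    have h1 : (volume.prod S.measure) E = ∫⁻ u in Ioc x 0, ENNReal.ofReal (S 0 - S u) := by
      rw [Measure.prod_apply hEm, ← lintegral_indicator measurableSet_Ioc]
      refine lintegral_congr fun u => ?_
      by_cases hu : u ∈ Ioc x 0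
      · rw [indicator_of_mem hu, ← S.measure_Ioc]
        congr 1
        ext a
        simp [hE, hu.1, and_comm]
      · rw [indicator_of_notMem hu]
        convert measure_empty (μ := S.measure)
        ext a
        simp only [hE, mem_preimage, mem_ofPred_eq, mem_empty_iff_false, iff_false]
        rintro ⟨h1, h2, h3⟩
        exact hu ⟨h3, by linarith⟩
    rw [← h1, Measure.prod_apply_symm hEm]
    refine lintegral_congr fun a => ?_
    unfold hk
    split_ifs with ha
    · rw [ENNReal.ofReal_of_nonpos (by linarith)]
      convert measure_empty (μ := (volume : Measure ℝ))
      ext u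
      simp [hE, ha]
    · rw [← Real.volume_Ioo]
      congr 1
      ext u
      simp [hE, not_lt.mp ha, and_comm]

lemma hk_measurable : Measurable (Function.uncurry hk) := by
  unfold hk Function.uncurry
  refine Measurable.ite (measurableSet_lt (by fun_prop) (by fun_prop)) (by fun_prop) (by fun_prop)

lemma hinge_integrable (α : Measure ℝ) [IsFiniteMeasure α] (h : Integrable (fun x : ℝ => x) α)
    (a : ℝ) : Integrable (fun x => max (x - a) 0) α :=
  (h.sub (integrable_const a)).pos_part

lemma convexOrder_of_hinge (α β : Measure ℝ) [IsFiniteMeasure α] [IsFiniteMeasure β]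
    (hα : Integrable (fun x : ℝ => x) α) (hβ : Integrable (fun x : ℝ => x) β)
    (hmass : α.real univ = β.real univ) (hmean : ∫ x, x ∂α = ∫ x, x ∂β)
    (hh : ∀ a, ∫ x, max (x - a) 0 ∂α ≤ ∫ x, max (x - a) 0 ∂β) : ConvexOrder α β := by
  intro φ hφ hφα hφβ
  obtain ⟨S, s, hS⟩ := convex_rep φ hφ
  have h1 : ∀ (γ : Measure ℝ) [IsFiniteMeasure γ], Integrable (fun x : ℝ => x) γ → ∀ a,
      ∫⁻ x, ENNReal.ofReal (x - a) ∂γ = ENNReal.ofReal (∫ x, max (x - a) 0 ∂γ) := by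
    intro γ _ hγ a
    rw [ofReal_integral_eq_lintegral_ofReal (hinge_integrable γ hγ a)
      (Filter.Eventually.of_forall fun x => le_max_right _ _)]
    exact lintegral_congr fun x => by simp [ENNReal.ofReal_max]
  have h2 : ∀ (γ : Measure ℝ) [IsFiniteMeasure γ], Integrable (fun x : ℝ => x) γ → ∀ a,
      ∫⁻ x, ENNReal.ofReal (a - x) ∂γ = ENNReal.ofReal (∫ x, max (x - a) 0 ∂γ + a * γ.real univ
        - ∫ x, x ∂γ) := by
    intro γ _ hγ a
    have : ∫ x, max (x - a) 0 ∂γ + a * γ.real univ - ∫ x, x ∂γ = ∫ x, max (a - x) 0 ∂γ := by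
      have e : (fun x : ℝ => max (a - x) 0) = fun x => max (x - a) 0 + a - x := by
        funext x
        rcases le_total a x with h | h
        · rw [max_eq_right (by linarith), max_eq_left (by linarith)]; ring
        · rw [max_eq_left (by linarith), max_eq_right (by linarith)]; ring
      rw [e, integral_sub (f := fun x => max (x - a) 0 + a) (g := fun x => x)
        ((hinge_integrable γ hγ a).add (integrable_const a)) hγ,
        integral_add (hinge_integrable γ hγ a) (integrable_const a)]
      simp [mul_comm]
    rw [this, ofReal_integral_eq_lintegral_ofReal (f := fun x => max (a - x) 0)
        ((((integrable_const a).sub hγ)).pos_part)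
      (Filter.Eventually.of_forall fun x => le_max_right _ _)]
    exact lintegral_congr fun x => by simp [ENNReal.ofReal_max]
  have hle : ∀ a, ∫⁻ x, hk a x ∂α ≤ ∫⁻ x, hk a x ∂β := by
    intro a
    unfold hk
    split_ifs
    · rw [h1 α hα, h1 β hβ]
      exact ENNReal.ofReal_le_ofReal (hh a)
    · rw [h2 α hα, h2 β hβ, hmass, hmean]
      exact ENNReal.ofReal_le_ofReal (by linarith [hh a])
  have hlin : ∀ (γ : Measure ℝ) [IsFiniteMeasure γ], Integrable (fun x : ℝ => x) γ →
      Integrable φ γ → Integrable (fun x => φ x - φ 0 - s * x) γ := fun γ _ hγ hφγ =>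
    (hφγ.sub (integrable_const _)).sub (hγ.const_mul s)
  have hval : ∀ (γ : Measure ℝ) [IsFiniteMeasure γ], Integrable (fun x : ℝ => x) γ →
      Integrable φ γ → ∫ x, (φ x - φ 0 - s * x) ∂γ
        = ∫ x, φ x ∂γ - φ 0 * γ.real univ - s * ∫ x, x ∂γ := by
    intro γ _ hγ hφγ
    rw [integral_sub (f := fun x => φ x - φ 0) (g := fun x => s * x)
        (hφγ.sub (integrable_const _)) (hγ.const_mul s),
      integral_sub hφγ (integrable_const _), integral_const_mul]
    simp [mul_comm]
  have hrep : ∀ (γ : Measure ℝ) [IsFiniteMeasure γ], Integrable (fun x : ℝ => x) γ →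
      Integrable φ γ → ENNReal.ofReal (∫ x, (φ x - φ 0 - s * x) ∂γ)
        = ∫⁻ a, ∫⁻ x, hk a x ∂γ ∂S.measure := by
    intro γ _ hγ hφγ
    rw [ofReal_integral_eq_lintegral_ofReal (hlin γ hγ hφγ)
      (Filter.Eventually.of_forall fun x => (hS x).1), lintegral_lintegral_swap
        hk_measurable.aemeasurable]
    exact lintegral_congr fun x => (hS x).2
  have hfin : ∫ x, (φ x - φ 0 - s * x) ∂α ≤ ∫ x, (φ x - φ 0 - s * x) ∂β := by
    rw [← ENNReal.ofReal_le_ofReal_iff (integral_nonneg fun x => (hS x).1), hrep α hα hφα,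
      hrep β hβ hφβ]
    exact lintegral_mono hle
  rw [hval α hα hφα, hval β hβ hφβ, hmass, hmean] at hfin
  linarith

end ConvexRep

section FMonoid

/-- Finite measures with finite first moment. -/
abbrev FM : Type := {μ : Measure ℝ // IsFiniteMeasure μ ∧ Integrable (fun x : ℝ => x) μ}

instance (μ : FM) : IsFiniteMeasure μ.1 := μ.2.1

lemma conv_int (μ ν : Measure ℝ) [IsFiniteMeasure μ] [IsFiniteMeasure ν]
    (hμ : Integrable (fun x : ℝ => x) μ) (hν : Integrable (fun x : ℝ => x) ν) :
    Integrable (fun x : ℝ => x) (Measure.conv μ ν) := by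
  unfold Measure.conv
  rw [integrable_map_measure (by fun_prop) (by fun_prop)]
  have := (hμ.comp_fst ν).add (hν.comp_snd μ)
  exact this

noncomputable instance : CommMonoid FM where
  mul μ ν := ⟨Measure.conv μ.1 ν.1, inferInstance, conv_int _ _ μ.2.2 ν.2.2⟩
  one := ⟨Measure.dirac 0, inferInstance, integrable_dirac (by simp)⟩
  mul_assoc μ ν ρ := Subtype.ext (Measure.conv_assoc _ _ _)
  one_mul μ := Subtype.ext (Measure.dirac_zero_conv _)
  mul_one μ := Subtype.ext (Measure.conv_dirac_zero _)
  mul_comm μ ν := Subtype.ext (Measure.conv_comm _ _)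

lemma FM.coe_mul (μ ν : FM) : (μ * ν).1 = Measure.conv μ.1 ν.1 := rfl
lemma FM.coe_one : (1 : FM).1 = Measure.dirac 0 := rfl

lemma FM.coe_pow (μ : FM) (n : ℕ) : (μ ^ n).1 = convPow μ.1 n := by
  induction n with
  | zero => rw [pow_zero]; rfl
  | succ n ih => rw [pow_succ, FM.coe_mul, ih]; rfl

lemma FM.coe_list (l : List FM) : (l.prod).1 = convList (l.map Subtype.val) := by
  induction l with
  | nil => rfl
  | cons a l ih => rw [List.prod_cons, FM.coe_mul, ih]; rfl

lemma FM.coe_prod {m : ℕ} (f : Fin m → FM) :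
    (∏ l, f l).1 = convList (List.ofFn fun l => (f l).1) := by
  rw [← List.prod_ofFn, FM.coe_list, List.map_ofFn]
  rfl

noncomputable def Lf (f : FM → ℝ) : MonoidAlgebra ℝ FM →+ ℝ :=
  (Finsupp.liftAddHom (fun g => AddMonoidHom.mulRight (f g))).comp
    (MonoidAlgebra.coeffAddEquiv (R := ℝ) (M := FM)).toAddMonoidHom

lemma Lf_of (f : FM → ℝ) (g : FM) : Lf f (MonoidAlgebra.of ℝ FM g) = f g := by
  change Finsupp.liftAddHom (fun g => AddMonoidHom.mulRight (f g)) (Finsupp.single g (1 : ℝ)) = f g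
  simp

lemma W_le {m : ℕ} (f : FM → ℝ) (X : Fin m → FM)
    (hf : ∀ i j h, 2 * f (h * (X i * X j)) ≤ f (h * (X i * X i)) + f (h * (X j * X j)))
    (p q : Fin m → ℕ) (hpq : Majorizes p q) :
    ∑ π : Equiv.Perm (Fin m), f (∏ l, X (π l) ^ p l)
      ≤ ∑ π : Equiv.Perm (Fin m), f (∏ l, X (π l) ^ q l) := by
  have key := muirhead (Lf f) (fun i => MonoidAlgebra.of ℝ FM (X i)) ?_ p q hpq
  · unfold symSum at key
    simp only [← map_pow, ← map_prod] at key
    simpa only [map_sum, Lf_of] using key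
  · intro i j g hg
    have : Submonoid.closure (range fun i => MonoidAlgebra.of ℝ FM (X i))
        ≤ MonoidHom.mrange (MonoidAlgebra.of ℝ FM) := by
      rw [Submonoid.closure_le]
      rintro _ ⟨i, rfl⟩
      exact ⟨X i, rfl⟩
    obtain ⟨h, rfl⟩ := this hg
    have e : (MonoidAlgebra.of ℝ FM (X i) - MonoidAlgebra.of ℝ FM (X j)) ^ 2
          * MonoidAlgebra.of ℝ FM h
        = MonoidAlgebra.of ℝ FM (h * (X i * X i)) + MonoidAlgebra.of ℝ FM (h * (X j * X j))
          - (MonoidAlgebra.of ℝ FM (h * (X i * X j)) + MonoidAlgebra.of ℝ FM (h * (X i * X j))) := by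
      simp only [map_mul]
      ring
    rw [e, map_sub, map_add, map_add, Lf_of, Lf_of, Lf_of]
    linarith [hf i j h]

noncomputable def hf (a : ℝ) (μ : FM) : ℝ := ∫ x, max (x - a) 0 ∂μ.1

lemma hf_mul (a : ℝ) (h μ : FM) :
    Integrable (fun z => hf (a - z) μ) h.1 ∧ hf a (h * μ) = ∫ z, hf (a - z) μ ∂h.1 := by
  have hi : Integrable (fun x => max (x - a) 0) (Measure.conv h.1 μ.1) :=
    hinge_integrable (h * μ).1 (h * μ).2.2 a
  have e : ∀ z, hf (a - z) μ = ∫ y, max (z + y - a) 0 ∂μ.1 := by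
    intro z
    unfold hf
    congr 1
    funext y
    congr 1
    ring
  simp only [e]
  constructor
  · have := (integrable_map_measure hi.1 (by fun_prop)).mp hi
    exact this.integral_prod_left
  · unfold hf
    rw [FM.coe_mul, integral_conv hi]

lemma base_conv (b : ℝ) (μ ν : FM) :
    Integrable (fun u => μ.1.real (Ioi u) * ν.1.real (Ioi (b - u))) ∧
      ∫ u, μ.1.real (Ioi u) * ν.1.real (Ioi (b - u)) = hf b (μ * ν) := by
  have hanti : ∀ κ : FM, Antitone (fun u => κ.1.real (Ioi u)) := fun κ u v huv =>
    measureReal_mono (Ioi_subset_Ioi huv)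
  have hmeas : Measurable (fun u => μ.1.real (Ioi u) * ν.1.real (Ioi (b - u))) :=
    (hanti μ).measurable.mul ((hanti ν).measurable.comp (by fun_prop))
  have hnn : ∀ u, 0 ≤ μ.1.real (Ioi u) * ν.1.real (Ioi (b - u)) := fun u => by positivity
  have hl : ∫⁻ u, ENNReal.ofReal (μ.1.real (Ioi u) * ν.1.real (Ioi (b - u)))
      = ENNReal.ofReal (hf b (μ * ν)) := by
    have hr : ENNReal.ofReal (hf b (μ * ν))
        = ∫⁻ z : ℝ × ℝ, ENNReal.ofReal (z.1 + z.2 - b) ∂(μ.1.prod ν.1) := by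
      unfold hf
      rw [ofReal_integral_eq_lintegral_ofReal (hinge_integrable (μ * ν).1 (μ * ν).2.2 b)
        (Filter.Eventually.of_forall fun x => le_max_right _ _), FM.coe_mul,
        Measure.conv, lintegral_map (by fun_prop) (by fun_prop)]
      exact lintegral_congr fun x => by simp [ENNReal.ofReal_max]
    rw [hr]
    set E : Set (ℝ × (ℝ × ℝ)) := {w | w.1 < w.2.1} ∩ {w | b - w.1 < w.2.2} with hE
    have hEm : MeasurableSet E :=
      (measurableSet_lt (by fun_prop) (by fun_prop)).inter
        (measurableSet_lt (by fun_prop) (by fun_prop))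
    have h1 : (volume.prod (μ.1.prod ν.1)) E
        = ∫⁻ u, ENNReal.ofReal (μ.1.real (Ioi u) * ν.1.real (Ioi (b - u))) := by
      rw [Measure.prod_apply hEm]
      refine lintegral_congr fun u => ?_
      have : Prod.mk u ⁻¹' E = (Ioi u) ×ˢ (Ioi (b - u)) := by
        ext z
        simp [hE]
      rw [this, Measure.prod_prod, ENNReal.ofReal_mul (by positivity)]
      simp
    rw [← h1, Measure.prod_apply_symm hEm]
    refine lintegral_congr fun z => ?_
    have : (fun u => (u, z)) ⁻¹' E = Ioo (b - z.2) z.1 := by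
      ext u
      simp only [hE, mem_preimage, mem_inter_iff, mem_ofPred_eq, mem_Ioo]
      constructor
      · rintro ⟨h1, h2⟩
        exact ⟨by linarith, h1⟩
      · rintro ⟨h1, h2⟩
        exact ⟨h2, by linarith⟩
    rw [this, Real.volume_Ioo]
    congr 1
    ring
  constructor
  · refine ⟨hmeas.aestronglyMeasurable, ?_⟩
    rw [hasFiniteIntegral_iff_ofReal (Filter.Eventually.of_forall hnn), hl]
    exact ENNReal.ofReal_lt_top
  · rw [integral_eq_lintegral_of_nonneg_ae (Filter.Eventually.of_forall hnn)
      hmeas.aestronglyMeasurable, hl, ENNReal.toReal_ofReal]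
    exact integral_nonneg fun x => le_max_right _ _

lemma base_ineq (μ ν : FM) (hmass : μ.1 univ = ν.1 univ)
    (hF : ∀ x, 0 ≤ fconv (fun t => distFun μ.1 t - distFun ν.1 t)
      (fun t => distFun μ.1 t - distFun ν.1 t) x) (b : ℝ) :
    2 * hf b (μ * ν) ≤ hf b (μ * μ) + hf b (ν * ν) := by
  have hd : ∀ (κ : FM) t, distFun κ.1 t = κ.1.real univ - κ.1.real (Ioi t) := by
    intro κ t
    have := measureReal_compl (μ := κ.1) (s := Ioi t) measurableSet_Ioi
    rw [compl_Ioi] at this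
    rw [← this]
    rfl
  have hm : μ.1.real univ = ν.1.real univ := by simp [Measure.real, hmass]
  have h := hF b
  unfold fconv at h
  have e : (fun t => (distFun μ.1 t - distFun ν.1 t) * (distFun μ.1 (b - t) - distFun ν.1 (b - t)))
      = fun t => (μ.1.real (Ioi t) * μ.1.real (Ioi (b - t)) + ν.1.real (Ioi t) * ν.1.real (Ioi (b - t)))
        - (μ.1.real (Ioi t) * ν.1.real (Ioi (b - t)) + ν.1.real (Ioi t) * μ.1.real (Ioi (b - t))) := by
    funext t
    rw [hd, hd, hd, hd, hm]
    ring
  have i1 : Integrable (fun t => μ.1.real (Ioi t) * μ.1.real (Ioi (b - t))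
      + ν.1.real (Ioi t) * ν.1.real (Ioi (b - t))) := (base_conv b μ μ).1.add (base_conv b ν ν).1
  have i2 : Integrable (fun t => μ.1.real (Ioi t) * ν.1.real (Ioi (b - t))
      + ν.1.real (Ioi t) * μ.1.real (Ioi (b - t))) := (base_conv b μ ν).1.add (base_conv b ν μ).1
  rw [e, integral_sub i1 i2,
    integral_add (base_conv b μ μ).1 (base_conv b ν ν).1,
    integral_add (base_conv b μ ν).1 (base_conv b ν μ).1, (base_conv b μ μ).2, (base_conv b ν ν).2,
    (base_conv b μ ν).2, (base_conv b ν μ).2, mul_comm ν μ] at h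
  linarith

lemma hinge_ineq (μ ν : FM) (hb : ∀ b, 2 * hf b (μ * ν) ≤ hf b (μ * μ) + hf b (ν * ν))
    (h : FM) (b : ℝ) :
    2 * hf b (h * (μ * ν)) ≤ hf b (h * (μ * μ)) + hf b (h * (ν * ν)) := by
  obtain ⟨i1, e1⟩ := hf_mul b h (μ * ν)
  obtain ⟨i2, e2⟩ := hf_mul b h (μ * μ)
  obtain ⟨i3, e3⟩ := hf_mul b h (ν * ν)
  rw [e1, e2, e3, ← integral_const_mul, ← integral_add i2 i3]
  exact integral_mono (i1.const_mul 2) (i2.add i3) fun z => hb _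

noncomputable def massf (μ : FM) : ℝ := μ.1.real univ
noncomputable def meanf (μ : FM) : ℝ := ∫ x, x ∂μ.1

lemma massf_mul (μ ν : FM) : massf (μ * ν) = massf μ * massf ν := by
  unfold massf
  rw [FM.coe_mul, Measure.conv, map_measureReal_apply (by fun_prop) MeasurableSet.univ,
    preimage_univ, ← univ_prod_univ, measureReal_prod_prod]

lemma meanf_mul (μ ν : FM) : meanf (μ * ν) = meanf μ * massf ν + massf μ * meanf ν := by
  unfold meanf massf
  rw [FM.coe_mul, integral_conv (μ * ν).2.2]
  have : ∀ x : ℝ, ∫ y, (x + y) ∂ν.1 = x * ν.1.real univ + ∫ y, y ∂ν.1 := by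
    intro x
    rw [integral_add (integrable_const x) ν.2.2]
    simp [mul_comm]
  simp only [this]
  rw [integral_add (μ.2.2.mul_const _) (integrable_const _), integral_mul_const]
  simp

lemma Wmeas_eq {m : ℕ} (p : Fin m → ℕ) (X : Fin m → FM) :
    Wmeas p (fun i => (X i).1) = ((m.factorial : ENNReal))⁻¹ •
      ∑ π : Equiv.Perm (Fin m), (∏ l, X (π l) ^ p l).1 := by
  unfold Wmeas
  congr 1
  refine Finset.sum_congr rfl fun π _ => ?_
  rw [FM.coe_prod]
  simp only [FM.coe_pow]

lemma Wmeas_finite {m : ℕ} (p : Fin m → ℕ) (X : Fin m → FM) :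
    IsFiniteMeasure (Wmeas p (fun i => (X i).1)) := by
  rw [Wmeas_eq]
  exact Measure.smul_finite _ (by simp [Nat.factorial_ne_zero])

lemma Wmeas_integrable {m : ℕ} (p : Fin m → ℕ) (X : Fin m → FM) (g : ℝ → ℝ)
    (hg : ∀ μ : FM, Integrable g μ.1) : Integrable g (Wmeas p (fun i => (X i).1)) := by
  rw [Wmeas_eq]
  refine Integrable.smul_measure ?_ (by simp [Nat.factorial_ne_zero])
  rw [integrable_finsetSum_measure]
  exact fun π _ => hg _

lemma Wmeas_integral {m : ℕ} (p : Fin m → ℕ) (X : Fin m → FM) (g : ℝ → ℝ)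
    (hg : ∀ μ : FM, Integrable g μ.1) : ∫ x, g x ∂(Wmeas p (fun i => (X i).1))
      = ((m.factorial : ENNReal))⁻¹.toReal
        * ∑ π : Equiv.Perm (Fin m), ∫ x, g x ∂(∏ l, X (π l) ^ p l).1 := by
  rw [Wmeas_eq, integral_smul_measure, integral_finsetSum_measure fun π _ => hg _]
  rfl

end FMonoid

/-- Theorem 3.8, Muirhead-type inequality for measures: under
equal masses, finite first moments and the convolution-positivity condition on the
distribution functions, p ≺ q implies W^p(μ₁,…,μ_m) ≼ₓ W^q(μ₁,…,μ_m). -/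
theorem stmt14 (m : ℕ) (μ : Fin m → Measure ℝ) [∀ i, IsFiniteMeasure (μ i)]
    (hmass : ∀ i j, μ i Set.univ = μ j Set.univ)
    (hint : ∀ l, Integrable (fun x : ℝ => |x|) (μ l))
    (hF : ∀ i j, ∀ x : ℝ, 0 ≤ fconv (fun t => distFun (μ i) t - distFun (μ j) t)
      (fun t => distFun (μ i) t - distFun (μ j) t) x)
    (p q : Fin m → ℕ) (hpq : Majorizes p q) :
    ConvexOrder (Wmeas p μ) (Wmeas q μ) := by

  have hint' : ∀ l, Integrable (fun x : ℝ => x) (μ l) := fun l =>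
    (integrable_norm_iff (f := fun x : ℝ => x) (by fun_prop)).1 (hint l)
  set X : Fin m → FM := fun i => ⟨μ i, inferInstance, hint' i⟩ with hX
  change ConvexOrder (Wmeas p (fun i => (X i).1)) (Wmeas q (fun i => (X i).1))
  have := Wmeas_finite p X
  have := Wmeas_finite q X
  have hms : ∀ i j, massf (X i) = massf (X j) := fun i j => by
    simp [massf, Measure.real, hX, hmass i j]
  refine convexOrder_of_hinge _ _ (Wmeas_integrable p X _ fun κ => κ.2.2)
    (Wmeas_integrable q X _ fun κ => κ.2.2) ?_ ?_ ?_
  · have e : ∀ r : Fin m → ℕ, (Wmeas r (fun i => (X i).1)).real univ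
        = ((m.factorial : ENNReal))⁻¹.toReal
          * ∑ π : Equiv.Perm (Fin m), massf (∏ l, X (π l) ^ r l) := by
      intro r
      have := Wmeas_integral r X (fun _ => 1) fun κ => integrable_const _
      simpa [massf] using this
    rw [e, e]
    congr 1
    refine le_antisymm (W_le massf X ?_ p q hpq) ?_
    · intro i j h
      simp only [massf_mul, hms i j]
      linarith
    · have := W_le (fun κ => - massf κ) X ?_ p q hpq
      · simpa using this
      · intro i j h
        simp only [massf_mul, hms i j]
        linarith
  · rw [Wmeas_integral p X _ fun κ => κ.2.2, Wmeas_integral q X _ fun κ => κ.2.2]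
    congr 1
    refine le_antisymm (W_le meanf X ?_ p q hpq) ?_
    · intro i j h
      simp only [meanf_mul, massf_mul, hms i j]
      linarith
    · have := W_le (fun κ => - meanf κ) X ?_ p q hpq
      · simpa [meanf] using this
      · intro i j h
        simp only [meanf_mul, massf_mul, hms i j]
        linarith
  · intro a
    rw [Wmeas_integral p X _ fun κ => hinge_integrable κ.1 κ.2.2 a,
      Wmeas_integral q X _ fun κ => hinge_integrable κ.1 κ.2.2 a]
    refine mul_le_mul_of_nonneg_left (W_le (hf a) X ?_ p q hpq) ENNReal.toReal_nonneg
    intro i j h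
    exact hinge_ineq (X i) (X j) (base_ineq (X i) (X j) (hmass i j) (hF i j)) h a
end

section
/- If p ≺ q (q majorizes p) are m-tuples of non-negative integers and x₁,…,x_m > 0, then W^p(x₁,…,x_m) ≤ W^q(x₁,…,x_m) (Muirhead's inequality with integer exponents). -/
open MeasureTheory Set

lemma muir_two (a b : ℝ) (ha : 0 < a) (hb : 0 < b) (c s : ℕ) :
    a ^ (c + s) * b ^ (c + 1) + b ^ (c + s) * a ^ (c + 1) ≤
      a ^ (c + s + 1) * b ^ c + b ^ (c + s + 1) * a ^ c := by
  have h : 0 ≤ (a ^ s - b ^ s) * (a - b) := by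
    rcases le_total a b with hab | hab
    · have := pow_le_pow_left₀ ha.le hab s
      exact mul_nonneg_of_nonpos_of_nonpos (by linarith) (by linarith)
    · have := pow_le_pow_left₀ hb.le hab s
      exact mul_nonneg (by linarith) (by linarith)
  have h2 : 0 ≤ (a ^ c * b ^ c) * ((a ^ s - b ^ s) * (a - b)) := by positivity
  have h3 : a ^ (c + s + 1) * b ^ c + b ^ (c + s + 1) * a ^ c -
      (a ^ (c + s) * b ^ (c + 1) + b ^ (c + s) * a ^ (c + 1)) =
      (a ^ c * b ^ c) * ((a ^ s - b ^ s) * (a - b)) := by ring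
  linarith

/-- Move one unit from `i` to `j`. -/
def muirMove {m : ℕ} (q : Fin m → ℕ) (i j : Fin m) : Fin m → ℕ :=
  fun l => if l = i then q i - 1 else if l = j then q j + 1 else q l

lemma muir_sum {m : ℕ} (q : Fin m → ℕ) (i j : Fin m) (hij : i ≠ j) (hq : 0 < q i)
    (s : Finset (Fin m)) (hi : i ∈ s) (hj : j ∈ s) :
    ∑ l ∈ s, muirMove q i j l = ∑ l ∈ s, q l := by
  have hj' : j ∈ s.erase i := Finset.mem_erase.2 ⟨hij.symm, hj⟩
  rw [← Finset.add_sum_erase _ _ hi, ← Finset.add_sum_erase _ _ hj',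
    ← Finset.add_sum_erase s q hi, ← Finset.add_sum_erase _ q hj']
  have : ∑ l ∈ (s.erase i).erase j, muirMove q i j l = ∑ l ∈ (s.erase i).erase j, q l := by
    apply Finset.sum_congr rfl
    intro l hl
    simp only [Finset.mem_erase] at hl
    simp [muirMove, hl.1, hl.2.1]
  rw [this]
  simp only [muirMove, if_true, if_neg hij.symm]
  omega

lemma muir_prod {m : ℕ} (q : Fin m → ℕ) (i j : Fin m) (hij : i ≠ j) (y : Fin m → ℝ) :
    ∏ l, y l ^ q l =
      (y i ^ q i * y j ^ q j) * ∏ l ∈ (Finset.univ.erase i).erase j, y l ^ q l := by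
  have hj' : j ∈ Finset.univ.erase i := Finset.mem_erase.2 ⟨hij.symm, Finset.mem_univ _⟩
  rw [← Finset.mul_prod_erase _ _ (Finset.mem_univ i), ← Finset.mul_prod_erase _ _ hj', mul_assoc]

lemma muir_step {m : ℕ} (q : Fin m → ℕ) (i j : Fin m) (hij : i ≠ j) (hq : q j < q i)
    (x : Fin m → ℝ) (hx : ∀ i, 0 < x i) :
    ∑ π : Equiv.Perm (Fin m), ∏ l, x (π l) ^ muirMove q i j l ≤
      ∑ π : Equiv.Perm (Fin m), ∏ l, x (π l) ^ q l := by
  have key : ∀ r : Fin m → ℕ, ∑ π : Equiv.Perm (Fin m), ∏ l, x (π l) ^ r l =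
      ∑ π : Equiv.Perm (Fin m), ∏ l, x (π (Equiv.swap i j l)) ^ r l := by
    intro r
    exact (Equiv.sum_comp (Equiv.mulRight (Equiv.swap i j))
      (fun π : Equiv.Perm (Fin m) => ∏ l, x (π l) ^ r l)).symm
  have h2 : ∀ r : Fin m → ℕ, 2 * ∑ π : Equiv.Perm (Fin m), ∏ l, x (π l) ^ r l =
      ∑ π : Equiv.Perm (Fin m), (∏ l, x (π l) ^ r l +
        ∏ l, x (π (Equiv.swap i j l)) ^ r l) := by
    intro r
    rw [Finset.sum_add_distrib, ← key r]; ring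
  suffices h : 2 * ∑ π : Equiv.Perm (Fin m), ∏ l, x (π l) ^ muirMove q i j l ≤
      2 * ∑ π : Equiv.Perm (Fin m), ∏ l, x (π l) ^ q l by linarith
  rw [h2, h2]
  apply Finset.sum_le_sum
  intro π _
  have hrest : ∀ l ∈ (Finset.univ.erase i).erase j, l ≠ j ∧ l ≠ i := by
    intro l hl
    simpa using hl
  rw [muir_prod _ i j hij (fun l => x (π l)), muir_prod q i j hij (fun l => x (π l)),
    muir_prod _ i j hij (fun l => x (π (Equiv.swap i j l))),
    muir_prod q i j hij (fun l => x (π (Equiv.swap i j l)))]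
  have e1 : ∏ l ∈ (Finset.univ.erase i).erase j, x (π l) ^ muirMove q i j l =
      ∏ l ∈ (Finset.univ.erase i).erase j, x (π l) ^ q l := by
    apply Finset.prod_congr rfl
    intro l hl
    simp [muirMove, (hrest l hl).1, (hrest l hl).2]
  have e2 : ∏ l ∈ (Finset.univ.erase i).erase j, x (π (Equiv.swap i j l)) ^ muirMove q i j l =
      ∏ l ∈ (Finset.univ.erase i).erase j, x (π l) ^ q l := by
    apply Finset.prod_congr rfl
    intro l hl
    rw [Equiv.swap_apply_of_ne_of_ne (hrest l hl).2 (hrest l hl).1]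
    simp [muirMove, (hrest l hl).1, (hrest l hl).2]
  have e3 : ∏ l ∈ (Finset.univ.erase i).erase j, x (π (Equiv.swap i j l)) ^ q l =
      ∏ l ∈ (Finset.univ.erase i).erase j, x (π l) ^ q l := by
    apply Finset.prod_congr rfl
    intro l hl
    rw [Equiv.swap_apply_of_ne_of_ne (hrest l hl).2 (hrest l hl).1]
  have hpos : 0 ≤ ∏ l ∈ (Finset.univ.erase i).erase j, x (π l) ^ q l :=
    Finset.prod_nonneg fun l _ => pow_nonneg (hx _).le _
  obtain ⟨s, hs⟩ : ∃ s, q i = q j + s + 1 := ⟨q i - q j - 1, by omega⟩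
  have mi : muirMove q i j i = q j + s := by simp [muirMove, hs]
  have mj : muirMove q i j j = q j + 1 := by simp [muirMove, hij.symm]
  rw [e1, e2, e3, ← add_mul, ← add_mul]
  apply mul_le_mul_of_nonneg_right _ hpos
  simp only [Equiv.swap_apply_left, Equiv.swap_apply_right]
  rw [mi, mj, hs]
  exact muir_two _ _ (hx _) (hx _) _ _

lemma muir_main {m : ℕ} (p : Fin m → ℕ) (hp : Antitone p)
    (x : Fin m → ℝ) (hx : ∀ i, 0 < x i) (n : ℕ) : ∀ q : Fin m → ℕ,
    ∑ l, (q l - p l) = n → ∑ l, p l = ∑ l, q l →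
    (∀ k : Fin m, ∑ l ∈ Finset.Iic k, p l ≤ ∑ l ∈ Finset.Iic k, q l) →
    ∑ π : Equiv.Perm (Fin m), ∏ l, x (π l) ^ p l ≤
      ∑ π : Equiv.Perm (Fin m), ∏ l, x (π l) ^ q l := by
  induction n using Nat.strong_induction_on with
  | _ n ih =>
  intro q hn hs hk
  by_cases hex : ∃ j, q j < p j
  · obtain ⟨j, hj, hmin⟩ : ∃ j, q j < p j ∧ ∀ l < j, p l ≤ q l := by
      obtain ⟨j, hj, hmin⟩ := wellFounded_lt.has_min {j | q j < p j} hex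
      exact ⟨j, hj, fun l hl => by
        by_contra hc
        exact hmin l (by simpa using hc) hl⟩
    obtain ⟨i, hij, hi⟩ : ∃ i, i < j ∧ p i < q i := by
      by_contra hc
      push Not at hc
      have : ∑ l ∈ Finset.Iic j, q l < ∑ l ∈ Finset.Iic j, p l := by
        apply Finset.sum_lt_sum
        · intro l hl
          rcases (Finset.mem_Iic.1 hl).lt_or_eq with h | h
          · exact hc l h
          · rw [h]; exact hj.le
        · exact ⟨j, by simp, hj⟩
      exact absurd (hk j) (by omega)
    have hpij := hp hij.le
    refine le_trans (ih (∑ l, (muirMove q i j l - p l)) ?_ (muirMove q i j) rfl ?_ ?_)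
      (muir_step q i j hij.ne (by omega) x hx)
    · rw [← hn]
      apply Finset.sum_lt_sum
      · intro l _
        unfold muirMove
        split_ifs with h1 h2
        · subst h1; omega
        · subst h2; omega
        · exact le_rfl
      · exact ⟨i, by simp, by simp [muirMove]; omega⟩
    · rw [muir_sum q i j hij.ne (by omega) _ (by simp) (by simp), hs]
    · intro k
      rcases lt_or_ge k j with h | h
      · apply Finset.sum_le_sum
        intro l hl
        have hlj : l < j := lt_of_le_of_lt (Finset.mem_Iic.1 hl) h
        have := hmin l hlj
        unfold muirMove
        split_ifs with h1 h2
        · subst h1; omega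
        · exact absurd h2 hlj.ne
        · exact this
      · rw [muir_sum q i j hij.ne (by omega) _ (by simpa using hij.le.trans h) (by simpa using h)]
        exact hk k
  · push Not at hex
    have : p = q := by
      funext l
      exact (Finset.sum_eq_sum_iff_of_le (fun i _ => hex i)).1 hs l (Finset.mem_univ l)
    rw [this]

lemma muir_sort {m : ℕ} (p : Fin m → ℕ) (x : Fin m → ℝ) :
    ∑ π : Equiv.Perm (Fin m), ∏ l, x (π l) ^ sortDesc p l =
      ∑ π : Equiv.Perm (Fin m), ∏ l, x (π l) ^ p l := by
  let σ : Equiv.Perm (Fin m) := Fin.revPerm.trans (Tuple.sort p)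
  rw [← Equiv.sum_comp (Equiv.mulRight σ)
      (fun π : Equiv.Perm (Fin m) => ∏ l, x (π l) ^ sortDesc p l)]
  apply Finset.sum_congr rfl
  intro π _
  exact Equiv.prod_comp σ (fun l => x (π l) ^ p l)

/-- classical Muirhead inequality with integer exponents: if
p ≺ q and x₁,…,x_m > 0, then W^p(x) ≤ W^q(x). -/
theorem stmt15 (m : ℕ) (p q : Fin m → ℕ) (hpq : Majorizes p q)
    (x : Fin m → ℝ) (hx : ∀ i, 0 < x i) :
    Wpoly p x ≤ Wpoly q x := by
  unfold Wpoly
  apply mul_le_mul_of_nonneg_left _ (by positivity)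
  rw [← muir_sort p, ← muir_sort q]
  refine muir_main (sortDesc p) ?_ x hx _ (sortDesc q) rfl hpq.1 hpq.2
  intro a b hab
  exact Tuple.monotone_sort p (Fin.rev_le_rev.2 hab)
end

section
/- Let μ₁,…,μ_m be finite Borel measures on ℝ with finite first moments such that μ₁(ℝ) = ⋯ = μ_m(ℝ) and ((F_i−F_j)*(F_i−F_j))(x) ≥ 0 for all i,j and all x ∈ ℝ, where F_i is the distribution function of μ_i. Then μ₁*⋯*μ_m ≼_cx (1/m)[(μ₁)^{*m} + ⋯ + (μ_m)^{*m}]. In particular, for binomial distributions μ_i = B(n,x_i) with x_i ∈ [0,1]: Σ_{i₁,…,i_m=0}^n ( b_{n,i₁}(x₁)⋯b_{n,i_m}(x₁) + ⋯ + b_{n,i₁}(x_m)⋯b_{n,i_m}(x_m) − m·b_{n,i₁}(x₁)⋯b_{n,i_m}(x_m) ) · φ((i₁+⋯+i_m)/(mn)) ≥ 0 for every convex function φ: ℝ → ℝ. -/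
open MeasureTheory Set

/-- The Bernstein basic polynomial b_{n,i}(x). -/
noncomputable def bern (n i : ℕ) (x : ℝ) : ℝ := (n.choose i : ℝ) * x ^ i * (1 - x) ^ (n - i)

/-- abstract AM-GM in a cone, power step -/
lemma cone_pow {R : Type*} [CommRing R] {ι : Type*} (a : ι → R)
    (C : Set R) (h0 : (0 : R) ∈ C) (hadd : ∀ p ∈ C, ∀ q ∈ C, p + q ∈ C)
    (hmul : ∀ i, ∀ r ∈ C, a i * r ∈ C)
    (hsq : ∀ i j, (a i - a j) ^ 2 ∈ C) (i j : ι) (k : ℕ) :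
    (a i - a j) * (a i ^ k - a j ^ k) ∈ C := by
  have hp : ∀ k, a j ^ k * (a i - a j) ^ 2 ∈ C := by
    intro k
    induction k with
    | zero => simpa using hsq i j
    | succ k ih =>
      have := hmul j _ ih
      rwa [← mul_assoc, ← pow_succ'] at this
  induction k with
  | zero => simpa using h0
  | succ k ih =>
    have := hadd _ (hmul i _ ih) _ (hp k)
    convert this using 1
    ring

lemma cone_amgm {R : Type*} [CommRing R] [Algebra ℝ R] {ι : Type*} [DecidableEq ι] (a : ι → R)
    (C : Set R) (h0 : (0 : R) ∈ C) (hadd : ∀ p ∈ C, ∀ q ∈ C, p + q ∈ C)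
    (hsmul : ∀ c : ℝ, 0 ≤ c → ∀ r ∈ C, c • r ∈ C)
    (hmul : ∀ i, ∀ r ∈ C, a i * r ∈ C)
    (hsq : ∀ i j, (a i - a j) ^ 2 ∈ C) (n : ℕ) : ∀ (s : Finset ι), s.card = n + 1 →
    ∑ i ∈ s, a i ^ (n + 1) - ((n : ℝ) + 1) • ∏ i ∈ s, a i ∈ C := by
  have hsum : ∀ (t : Finset ι) (f : ι → R), (∀ i ∈ t, f i ∈ C) → ∑ i ∈ t, f i ∈ C := by
    intro t f hf
    induction t using Finset.induction_on with
    | empty => simpa using h0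
    | insert i t hi ih =>
      rw [Finset.sum_insert hi]
      exact hadd _ (hf _ (by simp)) _ (ih fun j hj => hf j (by simp [hj]))
  induction n with
  | zero =>
    intro s hs
    obtain ⟨i, rfl⟩ := Finset.card_eq_one.1 hs
    simpa using h0
  | succ n ih =>
    intro s hs
    have h1 : ∑ i ∈ s, a i * (∑ j ∈ s.erase i, a j ^ (n + 1) - ((n : ℝ) + 1) • ∏ j ∈ s.erase i, a j) ∈ C := by
      refine hsum _ _ fun i hi => hmul i _ (ih _ ?_)
      rw [Finset.card_erase_of_mem hi, hs]; rfl
    have h2 : ∑ i ∈ s, ∑ j ∈ s, (a i - a j) * (a i ^ (n + 1) - a j ^ (n + 1)) ∈ C :=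
      hsum _ _ fun i _ => hsum _ _ fun j _ => cone_pow a C h0 hadd hmul hsq i j _
    have h3 := hsmul (1 / ((n : ℝ) + 1)) (by positivity) _
      (hadd _ h1 _ (hsmul (1 / 2) (by norm_num) _ h2))
    convert h3 using 1
    have e1 : ∑ i ∈ s, a i * (∑ j ∈ s.erase i, a j ^ (n + 1) - ((n : ℝ) + 1) • ∏ j ∈ s.erase i, a j)
        = (∑ i ∈ s, a i) * (∑ i ∈ s, a i ^ (n + 1)) - ∑ i ∈ s, a i ^ (n + 2)
          - (((n : ℝ) + 1) * (n + 2)) • ∏ i ∈ s, a i := by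
      have : ∀ i ∈ s, a i * (∑ j ∈ s.erase i, a j ^ (n + 1) - ((n : ℝ) + 1) • ∏ j ∈ s.erase i, a j)
          = a i * (∑ j ∈ s, a j ^ (n + 1)) - a i ^ (n + 2) - ((n : ℝ) + 1) • ∏ j ∈ s, a j := by
        intro i hi
        rw [← Finset.mul_prod_erase s a hi, ← Finset.add_sum_erase s _ hi, mul_sub, mul_smul_comm]
        ring
      rw [Finset.sum_congr rfl this, Finset.sum_sub_distrib, Finset.sum_sub_distrib, ← Finset.sum_mul,
        Finset.sum_const, hs, ← Nat.cast_smul_eq_nsmul ℝ, smul_smul]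
      congr 2
      push_cast; ring
    have e2 : ∑ i ∈ s, ∑ j ∈ s, (a i - a j) * (a i ^ (n + 1) - a j ^ (n + 1))
        = (2 * ((n : ℝ) + 2)) • ∑ i ∈ s, a i ^ (n + 2)
          - (2 : ℝ) • ((∑ i ∈ s, a i) * (∑ i ∈ s, a i ^ (n + 1))) := by
      have : ∀ i j, (a i - a j) * (a i ^ (n + 1) - a j ^ (n + 1))
         = a i ^ (n + 2) + a j ^ (n + 2) - (a i * a j ^ (n + 1) + a j * a i ^ (n + 1)) := by
        intro i j; ring
      simp only [this, Finset.sum_sub_distrib, Finset.sum_add_distrib, ← Finset.mul_sum,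
        ← Finset.sum_mul, Finset.sum_const, hs]
      simp only [← Nat.cast_smul_eq_nsmul ℝ, ← Finset.smul_sum]
      push_cast
      generalize (∑ i ∈ s, a i) * (∑ i ∈ s, a i ^ (n + 1)) = X
      module
    rw [e1, e2]
    have hn : (n : ℝ) + 1 ≠ 0 := by positivity
    simp only [show n + 1 + 1 = n + 2 from rfl]
    generalize (∑ i ∈ s, a i) * (∑ i ∈ s, a i ^ (n + 1)) = X
    push_cast
    match_scalars <;> field_simp <;> ring

/-- functional on polynomials -/
noncomputable def polyL (φ : ℝ → ℝ) (p : Polynomial ℝ) : ℝ := p.sum fun k c => c * φ k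

lemma polyL_add (φ : ℝ → ℝ) (p q : Polynomial ℝ) : polyL φ (p + q) = polyL φ p + polyL φ q := by
  unfold polyL
  exact Polynomial.sum_add_index p q _ (by simp) (by intros; ring)

lemma polyL_monomial (φ : ℝ → ℝ) (k : ℕ) (c : ℝ) :
    polyL φ (Polynomial.monomial k c) = c * φ k := by
  unfold polyL
  exact Polynomial.sum_monomial_index _ _ (by simp)

lemma polyL_smul (φ : ℝ → ℝ) (c : ℝ) (p : Polynomial ℝ) : polyL φ (c • p) = c * polyL φ p := by
  unfold polyL
  rw [Polynomial.sum_smul_index _ _ _ (by simp)]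
  simp only [Polynomial.sum, Finset.mul_sum, mul_assoc]

lemma polyL_sum {ι : Type*} (φ : ℝ → ℝ) (s : Finset ι) (f : ι → Polynomial ℝ) :
    polyL φ (∑ i ∈ s, f i) = ∑ i ∈ s, polyL φ (f i) := by
  classical
  induction s using Finset.induction_on with
  | empty => simp [polyL]
  | insert i t hi ih => rw [Finset.sum_insert hi, Finset.sum_insert hi, polyL_add, ih]

lemma polyL_X (φ : ℝ → ℝ) (p : Polynomial ℝ) :
    polyL φ (Polynomial.X * p) = polyL (fun x => φ (x + 1)) p := by
  induction p using Polynomial.induction_on' with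
  | add p q hp hq => rw [mul_add, polyL_add, polyL_add, hp, hq]
  | monomial k c =>
    rw [mul_comm, Polynomial.monomial_mul_X, polyL_monomial, polyL_monomial]; push_cast; rfl

lemma convex_shift {φ : ℝ → ℝ} (h : ConvexOn ℝ univ φ) (c : ℝ) :
    ConvexOn ℝ univ (fun x => φ (x + c)) := by
  refine ⟨convex_univ, fun x _ y _ a b ha hb hab => ?_⟩
  have := h.2 (mem_univ (x + c)) (mem_univ (y + c)) ha hb hab
  refine le_trans (le_of_eq ?_) this
  simp only [smul_eq_mul]
  congr 1
  linear_combination (-c) * hab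

def polyCone : Set (Polynomial ℝ) := {p | ∀ φ : ℝ → ℝ, ConvexOn ℝ univ φ → 0 ≤ polyL φ p}

lemma polyCone_add : ∀ p ∈ polyCone, ∀ q ∈ polyCone, p + q ∈ polyCone := by
  intro p hp q hq φ hφ
  rw [polyL_add]; exact add_nonneg (hp φ hφ) (hq φ hφ)

lemma polyCone_smul : ∀ c : ℝ, 0 ≤ c → ∀ r ∈ polyCone, c • r ∈ polyCone := by
  intro c hc r hr φ hφ
  rw [polyL_smul]; exact mul_nonneg hc (hr φ hφ)

lemma polyCone_lin (x : ℝ) (hx : x ∈ Icc (0 : ℝ) 1) : ∀ r ∈ polyCone,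
    (Polynomial.C (1 - x) + Polynomial.C x * Polynomial.X) * r ∈ polyCone := by
  intro r hr
  have : (Polynomial.C (1 - x) + Polynomial.C x * Polynomial.X) * r
      = (1 - x) • r + x • (Polynomial.X * r) := by
    rw [Polynomial.smul_eq_C_mul, Polynomial.smul_eq_C_mul]; ring
  rw [this]
  refine polyCone_add _ (polyCone_smul _ (by linarith [hx.2]) _ hr) _ (polyCone_smul _ hx.1 _ ?_)
  intro φ hφ
  rw [polyL_X]
  exact hr _ (convex_shift hφ 1)

lemma polyCone_pow {q : Polynomial ℝ} (hq : ∀ r ∈ polyCone, q * r ∈ polyCone) (k : ℕ) :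
    ∀ r ∈ polyCone, q ^ k * r ∈ polyCone := by
  induction k with
  | zero => intro r hr; simpa using hr
  | succ k ih => intro r hr; rw [pow_succ', mul_assoc]; exact hq _ (ih _ hr)

lemma polyCone_base : (1 - Polynomial.X : Polynomial ℝ) ^ 2 ∈ polyCone := by
  intro φ hφ
  have : (1 - Polynomial.X : Polynomial ℝ) ^ 2 = Polynomial.monomial 0 1
      + Polynomial.monomial 1 (-2) + Polynomial.monomial 2 1 := by
    rw [← Polynomial.C_mul_X_pow_eq_monomial, ← Polynomial.C_mul_X_pow_eq_monomial,
      ← Polynomial.C_mul_X_pow_eq_monomial]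
    simp only [map_neg, map_one, map_ofNat]
    ring
  rw [this, polyL_add, polyL_add, polyL_monomial, polyL_monomial, polyL_monomial]
  have h := hφ.2 (mem_univ (0 : ℝ)) (mem_univ (2 : ℝ)) (show (0 : ℝ) ≤ 1 / 2 by norm_num)
    (show (0 : ℝ) ≤ 1 / 2 by norm_num) (by norm_num)
  norm_num at h ⊢
  linarith

lemma polyCone_sq (n : ℕ) (x y : ℝ) (hx : x ∈ Icc (0 : ℝ) 1) (hy : y ∈ Icc (0 : ℝ) 1) :
    ((Polynomial.C (1 - x) + Polynomial.C x * Polynomial.X) ^ n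
      - (Polynomial.C (1 - y) + Polynomial.C y * Polynomial.X) ^ n) ^ 2 ∈ polyCone := by
  set p := (Polynomial.C (1 - x) + Polynomial.C x * Polynomial.X) with hp
  set q := (Polynomial.C (1 - y) + Polynomial.C y * Polynomial.X) with hq
  have key : ∀ r ∈ polyCone, (∑ i ∈ Finset.range n, p ^ i * q ^ (n - 1 - i)) * r ∈ polyCone := by
    intro r hr
    rw [Finset.sum_mul]
    refine Finset.sum_induction _ (· ∈ polyCone) (fun a b ha hb => polyCone_add a ha b hb) ?_ ?_
    · intro φ _; simp [polyL]
    · intro i _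
      rw [mul_assoc]
      exact polyCone_pow (polyCone_lin x hx) _ _ (polyCone_pow (polyCone_lin y hy) _ _ hr)
  have e : (p ^ n - q ^ n) ^ 2 = (∑ i ∈ Finset.range n, p ^ i * q ^ (n - 1 - i)) *
      ((∑ i ∈ Finset.range n, p ^ i * q ^ (n - 1 - i)) *
        ((y - x) ^ 2 • (1 - Polynomial.X : Polynomial ℝ) ^ 2)) := by
    rw [← (Commute.all p q).geom_sum₂_mul n, Polynomial.smul_eq_C_mul]
    have : p - q = Polynomial.C (y - x) * (1 - Polynomial.X) := by
      rw [hp, hq]; simp only [map_sub, map_one]; ring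
    rw [this, map_pow]
    ring
  rw [e]
  exact key _ (key _ (polyCone_smul _ (sq_nonneg _) _ polyCone_base))

lemma lin_pow_eq (n : ℕ) (x : ℝ) :
    (Polynomial.C (1 - x) + Polynomial.C x * Polynomial.X) ^ n
      = ∑ k : Fin (n + 1), Polynomial.monomial (k : ℕ) (bern n k x) := by
  rw [add_comm, add_pow, Finset.sum_range]
  refine Finset.sum_congr rfl fun k _ => ?_
  rw [← Polynomial.C_mul_X_pow_eq_monomial, bern]
  simp only [map_mul, map_pow, map_natCast, mul_pow]
  ring

lemma part2 (m : ℕ) (hm : 0 < m) (n : ℕ) (x : Fin m → ℝ)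
    (hx : ∀ i, x i ∈ Set.Icc (0 : ℝ) 1) (φ : ℝ → ℝ) (hφ : ConvexOn ℝ Set.univ φ) :
          0 ≤ ∑ t : Fin m → Fin (n + 1),
            ((∑ j : Fin m, ∏ l : Fin m, bern n (t l) (x j)) -
                (m : ℝ) * ∏ l : Fin m, bern n (t l) (x l)) *
              φ ((∑ l : Fin m, ((t l : ℕ) : ℝ)) / (m * n)) := by
  obtain ⟨k, rfl⟩ : ∃ k, m = k + 1 := ⟨m - 1, by omega⟩
  have key := cone_amgm (fun i => (Polynomial.C (1 - x i) + Polynomial.C (x i) * Polynomial.X) ^ n)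
    polyCone (by intro φ _; simp [polyL]) polyCone_add polyCone_smul
    (fun i => polyCone_pow (polyCone_lin (x i) (hx i)) n)
    (fun i j => polyCone_sq n _ _ (hx i) (hx j)) k Finset.univ (by simp)
  have hc : ConvexOn ℝ univ (fun y => φ (y / (((k + 1 : ℕ) : ℝ) * n))) := by
    have := hφ.comp_linearMap ((((k + 1 : ℕ) : ℝ) * n)⁻¹ • (LinearMap.id : ℝ →ₗ[ℝ] ℝ))
    simpa [Function.comp_def, div_eq_inv_mul] using this
  have h := key _ hc
  have e : ∀ y : Fin (k + 1) → ℝ, ∏ l : Fin (k + 1), (Polynomial.C (1 - y l) + Polynomial.C (y l) * Polynomial.X) ^ n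
     = ∑ t : Fin (k + 1) → Fin (n + 1),
      Polynomial.monomial (∑ l, (t l : ℕ)) (∏ l, bern n (t l) (y l)) := by
    intro y
    simp only [lin_pow_eq]
    rw [Finset.prod_univ_sum]
    simp only [Fintype.piFinset_univ]
    refine Finset.sum_congr rfl fun t _ => ?_
    simp only [← Polynomial.C_mul_X_pow_eq_monomial, Finset.prod_mul_distrib, map_prod,
      Finset.prod_pow_eq_pow_sum]
  have e' : ∀ j, ((Polynomial.C (1 - x j) + Polynomial.C (x j) * Polynomial.X) ^ n) ^ (k + 1)
      = ∑ t : Fin (k + 1) → Fin (n + 1),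
      Polynomial.monomial (∑ l, (t l : ℕ)) (∏ l, bern n (t l) (x j)) := by
    intro j
    rw [← e (fun _ => x j)]
    simp
  simp only [e, e'] at h
  rw [sub_eq_add_neg, ← neg_smul, polyL_add, polyL_smul] at h
  simp only [polyL_sum, polyL_monomial] at h
  rw [Finset.sum_comm, Finset.mul_sum, ← Finset.sum_add_distrib] at h
  refine h.trans_eq (Finset.sum_congr rfl fun t _ => ?_)
  rw [← Finset.sum_mul]
  push_cast
  ring

/-- tangent inequality -/
lemma tangent_le {φ : ℝ → ℝ} (h : ConvexOn ℝ univ φ) (x y : ℝ) :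
    φ y + derivWithin φ (Ioi y) y * (x - y) ≤ φ x := by
  rcases lt_trichotomy y x with hyx | rfl | hxy
  · have h1 := h.rightDeriv_le_slope_of_mem_interior (x := y) (y := x) (by simp) (by simp) hyx
    rw [slope_def_field, le_div_iff₀ (by linarith)] at h1
    linarith
  · simp
  · have h1 := h.slope_le_leftDeriv_of_mem_interior (x := x) (y := y) (by simp) (by simp) hxy
    have h2 := h.leftDeriv_le_rightDeriv_of_mem_interior (x := y) (by simp)
    have h3 := h1.trans h2
    rw [slope_def_field, div_le_iff₀ (by linarith)] at h3
    linarith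

lemma rightDeriv_mono {φ : ℝ → ℝ} (h : ConvexOn ℝ univ φ) :
    Monotone fun x => derivWithin φ (Ioi x) x := by
  have := h.monotoneOn_rightDeriv
  rw [interior_univ] at this
  exact monotoneOn_univ.1 this

lemma rightDeriv_bdd {φ : ℝ → ℝ} (h : ConvexOn ℝ univ φ) {K : NNReal} (hK : LipschitzWith K φ)
    (x : ℝ) : |derivWithin φ (Ioi x) x| ≤ K := by
  have h1 := tangent_le h (x + 1) x
  have h2 := tangent_le h (x - 1) x
  have h3 := hK.dist_le_mul (x + 1) x
  have h4 := hK.dist_le_mul (x - 1) x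
  simp only [Real.dist_eq] at h3 h4
  norm_num at h1 h2 h3 h4
  rw [abs_le] at *
  constructor <;> linarith [h3.1, h3.2, h4.1, h4.2]

lemma conv_rep {φ : ℝ → ℝ} (h : ConvexOn ℝ univ φ) {K : NNReal} (hK : LipschitzWith K φ) :
    ∃ γ : Measure ℝ, IsFiniteMeasure γ ∧ ∃ c : ℝ, ∀ x y : ℝ,
      φ y - φ x = ∫ t in x..y, (c + γ.real (Iio t)) := by
  set f : ℝ → ℝ := fun x => derivWithin φ (Ioi x) x with hf
  have hmono : Monotone f := rightDeriv_mono h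
  have hb : ∀ x, |f x| ≤ K := rightDeriv_bdd h hK
  set S := hmono.stieltjesFunction with hS
  have hSb : ∀ x, |S x| ≤ K := by
    intro x
    rw [abs_le]
    constructor
    · exact (abs_le.1 (hb x)).1.trans (hmono.le_rightLim le_rfl)
    · exact (hmono.rightLim_le (lt_add_one x)).trans (abs_le.1 (hb _)).2
  have hbot : Filter.Tendsto S Filter.atBot (nhds (⨅ x, S x)) :=
    tendsto_atBot_ciInf S.mono ⟨-K, by rintro _ ⟨x, rfl⟩; exact (abs_le.1 (hSb x)).1⟩
  have htop : Filter.Tendsto S Filter.atTop (nhds (⨆ x, S x)) :=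
    tendsto_atTop_ciSup S.mono ⟨K, by rintro _ ⟨x, rfl⟩; exact (abs_le.1 (hSb x)).2⟩
  refine ⟨S.measure, ⟨?_⟩, ⨅ x, S x, fun x y => ?_⟩
  · rw [S.measure_univ hbot htop]; exact ENNReal.ofReal_lt_top
  have hfi : IntervalIntegrable f volume x y := hmono.intervalIntegrable
  rw [← intervalIntegral.integral_eq_sub_of_hasDeriv_right hK.continuous.continuousOn
    (fun z _ => h.hasDerivWithinAt_rightDeriv_of_mem_interior (by simp)) hfi]
  refine intervalIntegral.integral_congr_ae ?_
  filter_upwards [S.countable_leftLim_ne.ae_notMem volume,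
    hmono.countable_not_continuousAt.ae_notMem volume] with t h1 h2 _
  simp only [not_not] at h1 h2
  rw [Measure.real, S.measure_Iio hbot, h1, ENNReal.toReal_ofReal]
  · rw [hmono.stieltjesFunction_eq, hmono.continuousWithinAt_Ioi_iff_rightLim_eq.1 h2.continuousWithinAt]
    ring
  · exact sub_nonneg.2 (ciInf_le ⟨-(K : ℝ), by rintro _ ⟨x, rfl⟩; exact (abs_le.1 (hSb x)).1⟩ t)

noncomputable def ker (x t : ℝ) : ℝ := (if t < x then 1 else 0) - (if t < 0 then 1 else 0)

lemma ker_of_nonneg {x : ℝ} (hx : 0 ≤ x) : ker x = (Ico 0 x).indicator 1 := by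
  ext t; simp only [ker, indicator, mem_Ico, Pi.one_apply]; split_ifs <;> grind

lemma ker_of_neg {x : ℝ} (hx : x ≤ 0) : ker x = -(Ico x 0).indicator 1 := by
  ext t; simp only [ker, indicator, mem_Ico, Pi.one_apply, Pi.neg_apply]; split_ifs <;> grind

lemma ker_meas : Measurable (fun p : ℝ × ℝ => ker p.1 p.2) := by
  unfold ker
  refine Measurable.sub (Measurable.ite ?_ measurable_const measurable_const)
    (Measurable.ite ?_ measurable_const measurable_const)
  · exact measurableSet_lt measurable_snd measurable_fst
  · exact measurableSet_lt measurable_snd measurable_const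

lemma ker_norm_int (x : ℝ) : Integrable (ker x) ∧ ∫ t, ‖ker x t‖ = |x| := by
  rcases le_total 0 x with hx | hx
  · rw [ker_of_nonneg hx]
    constructor
    · exact (integrable_indicator_iff measurableSet_Ico).2 (integrableOn_const (by simp))
    · simp only [norm_indicator_eq_indicator_norm, Pi.one_apply, norm_one]
      rw [integral_indicator measurableSet_Ico]
      simp [abs_of_nonneg hx, hx]
  · rw [ker_of_neg hx]
    constructor
    · exact ((integrable_indicator_iff measurableSet_Ico).2 (integrableOn_const (by simp))).neg
    · simp only [Pi.neg_apply, norm_neg, norm_indicator_eq_indicator_norm, Pi.one_apply, norm_one]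
      rw [integral_indicator measurableSet_Ico]
      simp [abs_of_nonpos hx, hx]

lemma ker_integral (g : ℝ → ℝ) (x : ℝ) : ∫ t in (0:ℝ)..x, g t = ∫ t, ker x t * g t := by
  rcases le_total 0 x with hx | hx
  · rw [ker_of_nonneg hx, intervalIntegral.integral_of_le hx, ← integral_Ico_eq_integral_Ioc,
      ← integral_indicator measurableSet_Ico]
    congr 1; ext t; simp [indicator]
  · rw [ker_of_neg hx, intervalIntegral.integral_of_ge hx, ← integral_Ico_eq_integral_Ioc,
      ← integral_indicator measurableSet_Ico, ← integral_neg]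
    congr 1; ext t; simp [indicator]

lemma ker_integrable (μ : Measure ℝ) [IsFiniteMeasure μ] (hμ : Integrable (fun x : ℝ => |x|) μ) :
    Integrable (fun p : ℝ × ℝ => ker p.1 p.2) (μ.prod volume) := by
  rw [integrable_prod_iff ker_meas.aestronglyMeasurable]
  refine ⟨Filter.Eventually.of_forall fun x => (ker_norm_int x).1, ?_⟩
  simpa only [(ker_norm_int _).2] using hμ

lemma ker_int_left (μ : Measure ℝ) [IsFiniteMeasure μ] (t : ℝ) :
    ∫ x, ker x t ∂μ = μ.real univ - distFun μ t - (if t < 0 then μ.real univ else 0) := by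
  have h1 : ∫ x, (if t < x then (1:ℝ) else 0) ∂μ = μ.real univ - distFun μ t := by
    have : (fun x => if t < x then (1:ℝ) else 0) = (Ioi t).indicator 1 := by
      ext x; simp [indicator]
    rw [this, integral_indicator_one measurableSet_Ioi, ← compl_Iic, measureReal_compl measurableSet_Iic]
    rfl
  have h2 : Integrable (fun x => if t < x then (1:ℝ) else 0) μ := by
    have : (fun x => if t < x then (1:ℝ) else 0) = (Ioi t).indicator 1 := by
      ext x; simp [indicator]
    rw [this]
    exact (integrable_indicator_iff measurableSet_Ioi).2 (integrableOn_const (by simp))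
  unfold ker
  rw [integral_sub h2 (integrable_const _), h1, integral_const]
  split_ifs <;> simp

/-- one measure: integration by parts -/
lemma parts_one (μ : Measure ℝ) [IsFiniteMeasure μ] (hμ : Integrable (fun x : ℝ => |x|) μ)
    (g : ℝ → ℝ) (hg : Measurable g) (C : ℝ) (hC : ∀ t, |g t| ≤ C) (ψ : ℝ → ℝ)
    (hψ : ∀ x, ψ x - ψ 0 = ∫ t in (0:ℝ)..x, g t) :
    Integrable (fun t => (∫ x, ker x t ∂μ) * g t) ∧
    ∫ x, ψ x ∂μ = μ.real univ * ψ 0 + ∫ t, (∫ x, ker x t ∂μ) * g t := by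
  have hI : Integrable (fun p : ℝ × ℝ => ker p.1 p.2 * g p.2) (μ.prod volume) := by
    refine (ker_integrable μ hμ).mul_bdd (c := C) ?_ ?_
    · exact (hg.comp measurable_snd).aestronglyMeasurable
    · exact Filter.Eventually.of_forall fun p => hC _
  constructor
  · have := hI.integral_prod_right
    simpa only [integral_mul_const] using this
  · have h1 : ψ = fun x => ψ 0 + ∫ t, ker x t * g t := by
      ext x; rw [← ker_integral, ← hψ]; ring
    have h2 : ∫ x, ψ x ∂μ = ∫ x, (ψ 0 + ∫ t, ker x t * g t) ∂μ := by
      conv_lhs => rw [h1]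
    rw [h2, integral_add (integrable_const _) hI.integral_prod_left, integral_const, smul_eq_mul]
    congr 1
    rw [integral_integral_swap hI]
    simp only [integral_mul_const]

lemma ker_diff (μ ν : Measure ℝ) [IsFiniteMeasure μ] [IsFiniteMeasure ν]
    (hmass : μ univ = ν univ) (t : ℝ) :
    (∫ x, ker x t ∂μ) - (∫ x, ker x t ∂ν) = -(distFun μ t - distFun ν t) := by
  rw [ker_int_left, ker_int_left]
  have : μ.real univ = ν.real univ := by simp [Measure.real, hmass]
  rw [this]; ring

lemma F_integrable (μ ν : Measure ℝ) [IsFiniteMeasure μ] [IsFiniteMeasure ν]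
    (hmass : μ univ = ν univ)
    (hμ : Integrable (fun x : ℝ => |x|) μ) (hν : Integrable (fun x : ℝ => |x|) ν) :
    Integrable (fun t => distFun μ t - distFun ν t) := by
  have := ((ker_integrable μ hμ).integral_prod_right.sub (ker_integrable ν hν).integral_prod_right).neg
  refine this.congr (Filter.Eventually.of_forall fun t => ?_)
  have := ker_diff μ ν hmass t
  simp only [Pi.neg_apply, Pi.sub_apply]
  linarith

lemma parts_two (μ ν : Measure ℝ) [IsFiniteMeasure μ] [IsFiniteMeasure ν]
    (hmass : μ univ = ν univ)
    (hμ : Integrable (fun x : ℝ => |x|) μ) (hν : Integrable (fun x : ℝ => |x|) ν)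
    (g : ℝ → ℝ) (hg : Measurable g) (C : ℝ) (hC : ∀ t, |g t| ≤ C) (ψ : ℝ → ℝ)
    (hψ : ∀ x, ψ x - ψ 0 = ∫ t in (0:ℝ)..x, g t) :
    ∫ x, ψ x ∂μ - ∫ x, ψ x ∂ν = -∫ t, (distFun μ t - distFun ν t) * g t := by
  obtain ⟨i1, e1⟩ := parts_one μ hμ g hg C hC ψ hψ
  obtain ⟨i2, e2⟩ := parts_one ν hν g hg C hC ψ hψ
  have : μ.real univ = ν.real univ := by simp [Measure.real, hmass]
  rw [e1, e2, this, add_sub_add_left_eq_sub, ← integral_sub i1 i2, ← integral_neg]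
  congr 1; ext t
  have := ker_diff μ ν hmass t
  rw [← sub_mul, this]; ring

lemma distFun_meas (μ : Measure ℝ) [IsFiniteMeasure μ] : Measurable (distFun μ) := by
  have : Monotone (distFun μ) := fun x y h =>
    measureReal_mono (μ := μ) (Iic_subset_Iic.2 h)
  exact this.measurable

lemma distFun_bdd (μ : Measure ℝ) [IsFiniteMeasure μ] (t : ℝ) :
    0 ≤ distFun μ t ∧ distFun μ t ≤ μ.real univ :=
  ⟨ENNReal.toReal_nonneg, measureReal_mono (μ := μ) (subset_univ _)⟩

lemma pair_pos (μ ν : Measure ℝ) [IsFiniteMeasure μ] [IsFiniteMeasure ν]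
    (hmass : μ univ = ν univ)
    (hμ : Integrable (fun x : ℝ => |x|) μ) (hν : Integrable (fun x : ℝ => |x|) ν)
    (hF : ∀ x : ℝ, 0 ≤ fconv (fun t => distFun μ t - distFun ν t)
      (fun t => distFun μ t - distFun ν t) x)
    {φ : ℝ → ℝ} (h : ConvexOn ℝ univ φ) {K : NNReal} (hK : LipschitzWith K φ) (z : ℝ)
    (ψ : ℝ → ℝ) (hψ : ∀ y, ψ y = ∫ x, φ (y + x) ∂μ - ∫ x, φ (y + x) ∂ν) :
    0 ≤ ∫ y, ψ (z + y) ∂μ - ∫ y, ψ (z + y) ∂ν := by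
  obtain ⟨γ, hγ, c, hrep⟩ := conv_rep h hK
  set F : ℝ → ℝ := fun t => distFun μ t - distFun ν t with hFdef
  have hFi : Integrable F := F_integrable μ ν hmass hμ hν
  have hFm : Measurable F := (distFun_meas μ).sub (distFun_meas ν)
  have hFb : ∀ t, |F t| ≤ μ.real univ + ν.real univ := by
    intro t
    have h1 := distFun_bdd μ t
    have h2 := distFun_bdd ν t
    rw [hFdef, abs_le]; constructor <;> simp only <;> linarith
  set g : ℝ → ℝ := fun u => c + γ.real (Iio u) with hg
  have hgm : Measurable g := by
    have : Monotone (fun u => γ.real (Iio u)) := fun x y h => measureReal_mono (Iio_subset_Iio h)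
    exact measurable_const.add this.measurable
  have hgb : ∀ t, |g t| ≤ |c| + γ.real univ := by
    intro t
    refine (abs_add_le _ _).trans ?_
    rw [abs_of_nonneg measureReal_nonneg]
    exact add_le_add le_rfl (measureReal_mono (subset_univ _))
  have hψ2 : ∀ y, ψ y = -∫ t, F t * g (y + t) := by
    intro y
    rw [hψ]
    refine parts_two μ ν hmass hμ hν (fun t => g (y + t)) (hgm.comp (measurable_const_add y)) _
      (fun t => hgb _) (fun x => φ (y + x)) (fun x => ?_)
    rw [hrep (y + 0) (y + x)]
    exact (intervalIntegral.integral_comp_add_left g y).symm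
  -- swap y and t
  have swap1 : ∀ ρ : Measure ℝ, IsFiniteMeasure ρ →
      Integrable (fun t => F t * ∫ y, g (z + y + t) ∂ρ) ∧
      ∫ y, ψ (z + y) ∂ρ = -∫ t, F t * ∫ y, g (z + y + t) ∂ρ := by
    intro ρ hρ
    have hI : Integrable (fun p : ℝ × ℝ => F p.2 * g (z + p.1 + p.2)) (ρ.prod volume) := by
      have : Integrable (fun p : ℝ × ℝ => F p.2) (ρ.prod volume) := hFi.comp_snd ρ
      refine this.mul_bdd (c := |c| + γ.real univ) ?_ ?_
      · exact (hgm.comp (by fun_prop)).aestronglyMeasurable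
      · exact Filter.Eventually.of_forall fun p => hgb _
    constructor
    · have := hI.integral_prod_right
      simpa only [integral_const_mul] using this
    · simp only [hψ2, integral_neg]
      rw [integral_integral_swap hI]
      simp only [integral_const_mul]
  have swap2 : ∀ ρ : Measure ℝ, IsFiniteMeasure ρ → ∀ w : ℝ,
      ∫ y, g (w + y) ∂ρ = ρ.real univ * c + ∫ s, (ρ.real univ - distFun ρ (s - w)) ∂γ := by
    intro ρ hρ w
    have hms : MeasurableSet {p : ℝ × ℝ | p.2 < w + p.1} :=
      measurableSet_lt measurable_snd (by fun_prop)
    have hI : Integrable (fun p : ℝ × ℝ => {p : ℝ × ℝ | p.2 < w + p.1}.indicator (1 : ℝ × ℝ → ℝ) p)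
        (ρ.prod γ) :=
      (integrable_indicator_iff hms).2 (integrableOn_const (by simp))
    have e1 : ∀ y, γ.real (Iio (w + y))
        = ∫ s, {p : ℝ × ℝ | p.2 < w + p.1}.indicator (1 : ℝ × ℝ → ℝ) (y, s) ∂γ := by
      intro y
      rw [← integral_indicator_one measurableSet_Iio]
      congr 1
    have e2 : ∀ s, ∫ y, {p : ℝ × ℝ | p.2 < w + p.1}.indicator (1 : ℝ × ℝ → ℝ) (y, s) ∂ρ
        = ρ.real univ - distFun ρ (s - w) := by
      intro s
      have : (fun y => {p : ℝ × ℝ | p.2 < w + p.1}.indicator (1 : ℝ × ℝ → ℝ) (y, s))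
          = (Ioi (s - w)).indicator 1 := by
        ext y; simp [indicator, sub_lt_iff_lt_add']
      rw [this, integral_indicator_one measurableSet_Ioi, ← compl_Iic,
        measureReal_compl measurableSet_Iic]
      rfl
    have hI1 : Integrable (fun y => γ.real (Iio (w + y))) ρ := by
      simp only [e1]; exact hI.integral_prod_left
    simp only [hg]
    rw [integral_add (integrable_const _) hI1, integral_const, smul_eq_mul]
    congr 1
    simp only [e1]
    rw [integral_integral_swap hI]
    simp only [e2]
  have hm : μ.real univ = ν.real univ := by simp [Measure.real, hmass]
  have hDi : ∀ (ρ : Measure ℝ) [IsFiniteMeasure ρ] (w : ℝ),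
      Integrable (fun s => ρ.real univ - distFun ρ (s - w)) γ := by
    intro ρ _ w
    refine Integrable.of_bound (C := ρ.real univ)
      ((measurable_const.sub ((distFun_meas ρ).comp (by fun_prop))).aestronglyMeasurable) ?_
    refine Filter.Eventually.of_forall fun s => ?_
    have := distFun_bdd ρ (s - w)
    rw [Real.norm_eq_abs, abs_le]; constructor <;> linarith
  have diff : ∀ w, ∫ y, g (w + y) ∂μ - ∫ y, g (w + y) ∂ν = -∫ s, F (s - w) ∂γ := by
    intro w
    rw [swap2 μ inferInstance, swap2 ν inferInstance, hm, add_sub_add_left_eq_sub, ← hm,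
      ← integral_sub (hDi μ w) (by rw [hm]; exact hDi ν w), ← integral_neg]
    congr 1; ext s; simp only [hFdef]; ring
  obtain ⟨j1, e1⟩ := swap1 μ inferInstance
  obtain ⟨j2, e2⟩ := swap1 ν inferInstance
  have e3 : ∫ y, ψ (z + y) ∂μ - ∫ y, ψ (z + y) ∂ν = ∫ t, ∫ s, F t * F (s - z - t) ∂γ := by
    rw [e1, e2, neg_sub_neg, ← integral_sub j2 j1]
    congr 1; ext t
    rw [← mul_sub, integral_const_mul]
    congr 1
    have := diff (z + t)
    have e : ∀ y, z + y + t = z + t + y := fun y => by ring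
    have e' : ∀ s, s - z - t = s - (z + t) := fun y => by ring
    simp only [e, e']
    linarith
  have hI : Integrable (fun p : ℝ × ℝ => F p.1 * F (p.2 - z - p.1)) (volume.prod γ) := by
    have : Integrable (fun p : ℝ × ℝ => F p.1) ((volume : Measure ℝ).prod γ) := hFi.comp_fst γ
    refine this.mul_bdd (c := μ.real univ + ν.real univ) ?_ ?_
    · exact (hFm.comp (by fun_prop)).aestronglyMeasurable
    · exact Filter.Eventually.of_forall fun p => hFb _
  rw [e3, integral_integral_swap hI]
  exact integral_nonneg fun s => hF (s - z)

/-- The space of Lipschitz functions. -/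
def LipV : Submodule ℝ (ℝ → ℝ) where
  carrier := {f | ∃ K : NNReal, LipschitzWith K f}
  add_mem' := by rintro f g ⟨K, hK⟩ ⟨L, hL⟩; exact ⟨_, hK.add hL⟩
  zero_mem' := ⟨0, LipschitzWith.const 0⟩
  smul_mem' := by
    rintro c f ⟨K, hK⟩
    exact ⟨_, (lipschitzWith_smul c).comp hK⟩

lemma lip_integrable {f : ℝ → ℝ} {K : NNReal} (hf : LipschitzWith K f) (μ : Measure ℝ)
    [IsFiniteMeasure μ] (hμ : Integrable (fun x : ℝ => |x|) μ) : Integrable f μ := by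
  refine Integrable.mono' ((integrable_const |f 0|).add (hμ.const_mul (K : ℝ)))
    hf.continuous.aestronglyMeasurable (Filter.Eventually.of_forall fun x => ?_)
  have h := hf.dist_le_mul x 0
  rw [Real.dist_eq, Real.dist_eq, sub_zero] at h
  have h2 := abs_sub_abs_le_abs_sub (f x) (f 0)
  simp only [Pi.add_apply, Real.norm_eq_abs]
  linarith

lemma lip_shift {f : ℝ → ℝ} {K : NNReal} (hf : LipschitzWith K f) (x : ℝ) :
    LipschitzWith K (fun y => f (x + y)) := by
  refine LipschitzWith.of_dist_le_mul fun y z => ?_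
  have := hf.dist_le_mul (x + y) (x + z)
  rwa [dist_add_left] at this

lemma lip_T {f : ℝ → ℝ} {K : NNReal} (hf : LipschitzWith K f) (μ : Measure ℝ)
    [IsFiniteMeasure μ] (hμ : Integrable (fun x : ℝ => |x|) μ) :
    LipschitzWith (K * (μ.real univ).toNNReal) (fun x => ∫ y, f (x + y) ∂μ) := by
  refine LipschitzWith.of_dist_le_mul fun x z => ?_
  rw [Real.dist_eq, ← integral_sub (lip_integrable (lip_shift hf x) μ hμ)
    (lip_integrable (lip_shift hf z) μ hμ)]
  have : ‖∫ y, (f (x + y) - f (z + y)) ∂μ‖ ≤ K * dist x z * μ.real univ := by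
    refine norm_integral_le_of_norm_le_const (Filter.Eventually.of_forall fun y => ?_)
    have := hf.dist_le_mul (x + y) (z + y)
    rwa [dist_add_right] at this
  rw [Real.norm_eq_abs] at this
  refine this.trans_eq ?_
  simp only [NNReal.coe_mul, Real.coe_toNNReal _ measureReal_nonneg]
  ring

/-- The translation-average operator associated with a measure. -/
noncomputable def avgOp (μ : Measure ℝ) [IsFiniteMeasure μ] (hμ : Integrable (fun x : ℝ => |x|) μ) :
    Module.End ℝ LipV where
  toFun f := ⟨fun x => ∫ y, f.1 (x + y) ∂μ, by
    obtain ⟨K, hK⟩ := f.2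
    exact ⟨_, lip_T hK μ hμ⟩⟩
  map_add' f g := by
    obtain ⟨K, hK⟩ := f.2
    obtain ⟨L, hL⟩ := g.2
    ext x
    exact integral_add (lip_integrable (lip_shift hK x) μ hμ) (lip_integrable (lip_shift hL x) μ hμ)
  map_smul' c f := by
    ext x
    exact integral_const_mul c _

lemma avgOp_apply (μ : Measure ℝ) [IsFiniteMeasure μ] (hμ : Integrable (fun x : ℝ => |x|) μ)
    (f : LipV) (x : ℝ) : (avgOp μ hμ f).1 x = ∫ y, f.1 (x + y) ∂μ := rfl

lemma avgOp_convex (μ : Measure ℝ) [IsFiniteMeasure μ] (hμ : Integrable (fun x : ℝ => |x|) μ)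
    (f : LipV) (hf : ConvexOn ℝ univ f.1) : ConvexOn ℝ univ (avgOp μ hμ f).1 := by
  obtain ⟨K, hK⟩ := f.2
  refine integral_convexOn_of_integrand_ae (f := fun y x => f.1 (x + y)) convex_univ
    (Filter.Eventually.of_forall fun y => convex_shift hf y) fun x _ => ?_
  exact lip_integrable (lip_shift hK x) μ hμ

lemma conv_moment (μ ν : Measure ℝ) [IsFiniteMeasure μ] [IsFiniteMeasure ν]
    (hμ : Integrable (fun x : ℝ => |x|) μ) (hν : Integrable (fun x : ℝ => |x|) ν) :
    Integrable (fun x : ℝ => |x|) (Measure.conv μ ν) := by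
  have hl : LipschitzWith 1 (fun x : ℝ => |x|) := lipschitzWith_one_norm
  rw [integrable_conv_iff continuous_abs.aestronglyMeasurable]
  refine ⟨Filter.Eventually.of_forall fun x => lip_integrable (lip_shift hl x) ν hν, ?_⟩
  simp only [Real.norm_eq_abs, abs_abs]
  exact lip_integrable (lip_T hl ν hν) μ hμ

lemma avgOp_conv (μ ν : Measure ℝ) [IsFiniteMeasure μ] [IsFiniteMeasure ν]
    (hμ : Integrable (fun x : ℝ => |x|) μ) (hν : Integrable (fun x : ℝ => |x|) ν) :
    avgOp (Measure.conv μ ν) (conv_moment μ ν hμ hν) = avgOp μ hμ * avgOp ν hν := by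
  ext f x
  obtain ⟨K, hK⟩ := f.2
  change ∫ y, f.1 (x + y) ∂(Measure.conv μ ν) = ∫ y, ∫ w, f.1 (x + y + w) ∂ν ∂μ
  rw [integral_conv (lip_integrable (lip_shift hK x) _ (conv_moment μ ν hμ hν))]
  simp only [add_assoc]

lemma avgOp_congr {μ ν : Measure ℝ} [IsFiniteMeasure μ] [IsFiniteMeasure ν]
    (hμ : Integrable (fun x : ℝ => |x|) μ) (hν : Integrable (fun x : ℝ => |x|) ν) (h : μ = ν) :
    avgOp μ hμ = avgOp ν hν := by
  subst h; rfl

lemma avgOp_comm (μ ν : Measure ℝ) [IsFiniteMeasure μ] [IsFiniteMeasure ν]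
    (hμ : Integrable (fun x : ℝ => |x|) μ) (hν : Integrable (fun x : ℝ => |x|) ν) :
    avgOp μ hμ * avgOp ν hν = avgOp ν hν * avgOp μ hμ := by
  rw [← avgOp_conv, ← avgOp_conv]
  exact avgOp_congr _ _ (Measure.conv_comm μ ν)

lemma dirac_moment : Integrable (fun x : ℝ => |x|) (Measure.dirac (0 : ℝ)) :=
  integrable_dirac (by simp)

lemma avgOp_dirac : avgOp (Measure.dirac 0) dirac_moment = 1 := by
  ext f x
  change ∫ y, f.1 (x + y) ∂(Measure.dirac 0) = f.1 x
  simp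

lemma convPow_good (μ : Measure ℝ) [IsFiniteMeasure μ] (hμ : Integrable (fun x : ℝ => |x|) μ)
    (n : ℕ) : ∃ (_ : IsFiniteMeasure (convPow μ n))
      (h : Integrable (fun x : ℝ => |x|) (convPow μ n)), avgOp (convPow μ n) h = avgOp μ hμ ^ n := by
  induction n with
  | zero => exact ⟨by unfold convPow; infer_instance, dirac_moment, avgOp_dirac⟩
  | succ n ih =>
    obtain ⟨h1, h2, h3⟩ := ih
    refine ⟨by unfold convPow; infer_instance, conv_moment _ _ h2 hμ, ?_⟩
    rw [pow_succ, ← h3]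
    exact avgOp_conv _ _ h2 hμ

lemma convList_good {ι : Type*} (μ : ι → Measure ℝ) [∀ i, IsFiniteMeasure (μ i)]
    (hμ : ∀ i, Integrable (fun x : ℝ => |x|) (μ i)) (l : List ι) :
    ∃ (_ : IsFiniteMeasure (convList (l.map μ)))
      (h : Integrable (fun x : ℝ => |x|) (convList (l.map μ))),
      avgOp (convList (l.map μ)) h = (l.map fun i => avgOp (μ i) (hμ i)).prod := by
  induction l with
  | nil => exact ⟨by simp only [List.map_nil]; unfold convList; infer_instance,
      dirac_moment, avgOp_dirac⟩
  | cons i l ih =>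
    obtain ⟨h1, h2, h3⟩ := ih
    refine ⟨by simp only [List.map_cons]; unfold convList; infer_instance,
      conv_moment _ _ (hμ i) h2, ?_⟩
    have h4 := avgOp_conv _ _ (hμ i) h2
    rw [h3] at h4
    exact h4

lemma cone_amgm_nc {A : Type*} [Ring A] [Algebra ℝ A] (n : ℕ) (T : Fin (n + 1) → A)
    (hcomm : ∀ i j, T i * T j = T j * T i)
    (C : Set A) (h0 : (0 : A) ∈ C) (hadd : ∀ p ∈ C, ∀ q ∈ C, p + q ∈ C)
    (hsmul : ∀ c : ℝ, 0 ≤ c → ∀ r ∈ C, c • r ∈ C)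
    (hmul : ∀ i, ∀ r ∈ C, r * T i ∈ C)
    (hsq : ∀ i j, (T i - T j) * (T i - T j) ∈ C) :
    ∑ i, T i ^ (n + 1) - ((n : ℝ) + 1) • ((List.finRange (n + 1)).map T).prod ∈ C := by
  have hcomm' : ∀ a ∈ range T, ∀ b ∈ range T, a * b = b * a := by
    rintro _ ⟨i, rfl⟩ _ ⟨j, rfl⟩
    exact hcomm i j
  have hmc := Algebra.isMulCommutative_adjoin ℝ hcomm'
  let S := Algebra.adjoin ℝ (range T)
  letI : CommRing S :=
    { (inferInstance : Ring S) with
      mul_comm := fun p q => hmc.is_comm.comm p q }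
  let a : Fin (n + 1) → S := fun i => ⟨T i, Algebra.subset_adjoin ⟨i, rfl⟩⟩
  have key := cone_amgm a {r : S | (r : A) ∈ C} h0
    (fun p hp q hq => hadd _ hp _ hq)
    (fun c hc r hr => hsmul c hc _ hr)
    (by
      intro i r hr
      rw [mul_comm]
      exact hmul i _ hr)
    (by
      intro i j
      rw [sq]
      exact hsq i j)
    n Finset.univ (by simp)
  have e1 : S.val (∏ i, a i) = ((List.finRange (n + 1)).map T).prod := by
    rw [← List.prod_ofFn, List.ofFn_eq_map]
    generalize List.finRange (n + 1) = l
    induction l with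
    | nil => rfl
    | cons i l ih =>
      rw [List.map_cons, List.prod_cons, List.map_cons, List.prod_cons, ← ih]
      rfl
  have e2 : S.val (∑ i, a i ^ (n + 1)) = ∑ i, T i ^ (n + 1) := by
    rw [map_sum]
    refine Finset.sum_congr rfl fun i _ => ?_
    exact map_pow S.val (a i) (n + 1)
  rw [← e1, ← e2]
  exact key

lemma lip_case (m : ℕ) (hm : 0 < m) (μ : Fin m → Measure ℝ) [∀ i, IsFiniteMeasure (μ i)]
    (hmass : ∀ i j, μ i Set.univ = μ j Set.univ)
    (hint : ∀ l, Integrable (fun x : ℝ => |x|) (μ l))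
    (hF : ∀ i j, ∀ x : ℝ, 0 ≤ fconv (fun t => distFun (μ i) t - distFun (μ j) t)
      (fun t => distFun (μ i) t - distFun (μ j) t) x)
    (φ : ℝ → ℝ) (h : ConvexOn ℝ univ φ) {K : NNReal} (hK : LipschitzWith K φ) :
    (m : ℝ) * ∫ x, φ x ∂(convList (List.ofFn μ)) ≤ ∑ i, ∫ x, φ x ∂(convPow (μ i) m) := by
  obtain ⟨k, rfl⟩ : ∃ k, m = k + 1 := ⟨m - 1, by omega⟩
  set T : Fin (k + 1) → Module.End ℝ LipV := fun i => avgOp (μ i) (hint i) with hT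
  have key := cone_amgm_nc k T (fun i j => avgOp_comm _ _ _ _)
    {r | ∀ f : LipV, ConvexOn ℝ univ f.1 → ∀ x, 0 ≤ (r f).1 x}
    (by intro f _ x; exact le_rfl)
    (by intro p hp q hq f hf x; exact add_nonneg (hp f hf x) (hq f hf x))
    (by intro c hc r hr f hf x; exact mul_nonneg hc (hr f hf x))
    (by
      intro i r hr f hf x
      exact hr (T i f) (avgOp_convex _ _ f hf) x)
    (by
      intro i j f hf x
      obtain ⟨K, hK⟩ := f.2
      exact pair_pos (μ i) (μ j) (hmass i j) (hint i) (hint j) (hF i j) hf hK x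
        ((T i - T j) f).1 (fun y => rfl))
  have h1 := key ⟨φ, K, hK⟩ h 0
  obtain ⟨g1, g2, g3⟩ := convList_good μ hint (List.finRange (k + 1))
  have e2 : (((List.finRange (k + 1)).map T).prod ⟨φ, K, hK⟩).1 0
      = ∫ x, φ x ∂(convList (List.ofFn μ)) := by
    rw [← g3, avgOp_apply, List.ofFn_eq_map]
    simp only [zero_add]
  have e3 : ∀ i, ((T i ^ (k + 1)) ⟨φ, K, hK⟩).1 0 = ∫ x, φ x ∂(convPow (μ i) (k + 1)) := by
    intro i
    obtain ⟨g1, g2, g3⟩ := convPow_good (μ i) (hint i) (k + 1)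
    change ((avgOp (μ i) (hint i) ^ (k + 1)) _).1 0 = _
    rw [← g3, avgOp_apply]
    simp only [zero_add]
  have e4 : ((∑ i, T i ^ (k + 1)) ⟨φ, K, hK⟩).1 0
      = ∑ i, ∫ x, φ x ∂(convPow (μ i) (k + 1)) := by
    simp only [← e3]
    rw [LinearMap.sum_apply, AddSubmonoidClass.coe_finsetSum, Finset.sum_apply]
  rw [← e4, ← e2]
  have h2 : 0 ≤ ((∑ i, T i ^ (k + 1)) ⟨φ, K, hK⟩).1 0
    - ((k : ℝ) + 1) * (((List.finRange (k + 1)).map T).prod ⟨φ, K, hK⟩).1 0 := h1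
  push_cast at h2 ⊢
  linarith

/-- Lipschitz approximation from below. -/
noncomputable def lapp (φ : ℝ → ℝ) (n : ℕ) (x : ℝ) : ℝ :=
  ⨆ y : Icc (-(n : ℝ)) n, (φ y + derivWithin φ (Ioi (y : ℝ)) y * (x - y))

instance lapp_ne (n : ℕ) : Nonempty (Icc (-(n : ℝ)) n) :=
  ⟨⟨0, by constructor <;> simp⟩⟩

lemma lapp_bdd {φ : ℝ → ℝ} (h : ConvexOn ℝ univ φ) (n : ℕ) (x : ℝ) :
    BddAbove (range fun y : Icc (-(n : ℝ)) n => (φ y + derivWithin φ (Ioi (y : ℝ)) y * (x - y))) :=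
  ⟨φ x, by rintro _ ⟨y, rfl⟩; exact tangent_le h x y⟩

lemma lapp_le {φ : ℝ → ℝ} (h : ConvexOn ℝ univ φ) (n : ℕ) (x : ℝ) : lapp φ n x ≤ φ x :=
  ciSup_le fun y => tangent_le h x y

lemma le_lapp {φ : ℝ → ℝ} (h : ConvexOn ℝ univ φ) (n : ℕ) (x : ℝ) (y : ℝ) (hy : y ∈ Icc (-(n : ℝ)) n) :
    φ y + derivWithin φ (Ioi y) y * (x - y) ≤ lapp φ n x :=
  le_ciSup (lapp_bdd h n x) ⟨y, hy⟩

lemma lapp_eq {φ : ℝ → ℝ} (h : ConvexOn ℝ univ φ) (n : ℕ) (x : ℝ) (hx : x ∈ Icc (-(n : ℝ)) n) :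
    lapp φ n x = φ x := by
  refine le_antisymm (lapp_le h n x) ?_
  simpa using le_lapp h n x x hx

lemma lapp_convex {φ : ℝ → ℝ} (h : ConvexOn ℝ univ φ) (n : ℕ) : ConvexOn ℝ univ (lapp φ n) := by
  refine ⟨convex_univ, fun x _ z _ a b ha hb hab => ciSup_le fun y => ?_⟩
  have h1 := mul_le_mul_of_nonneg_left (le_lapp h n x y y.2) ha
  have h2 := mul_le_mul_of_nonneg_left (le_lapp h n z y y.2) hb
  simp only [smul_eq_mul]
  refine le_trans (le_of_eq ?_) (add_le_add h1 h2)
  obtain rfl : b = 1 - a := by linarith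
  ring

lemma lapp_lip {φ : ℝ → ℝ} (h : ConvexOn ℝ univ φ) (n : ℕ) : ∃ K, LipschitzWith K (lapp φ n) := by
  set f : ℝ → ℝ := fun x => derivWithin φ (Ioi x) x with hf
  have hmono : Monotone f := rightDeriv_mono h
  refine ⟨(|f (-n)| + |f n|).toNNReal, LipschitzWith.of_le_add_mul _ fun x z => ciSup_le fun y => ?_⟩
  have h1 := le_lapp h n z y y.2
  have hb : |f y| ≤ |f (-n)| + |f n| := by
    have h1 := hmono y.2.1
    have h2 := hmono y.2.2
    have := neg_abs_le (f (-n))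
    have := le_abs_self (f n)
    have := abs_nonneg (f n)
    have := abs_nonneg (f (-n))
    rw [abs_le]; constructor <;> linarith
  rw [Real.coe_toNNReal _ (by positivity), Real.dist_eq]
  have h3 : f y * (x - z) ≤ (|f (-n)| + |f n|) * |x - z| := by
    refine (le_abs_self _).trans ?_
    rw [abs_mul]
    gcongr
  have h4 : f y = derivWithin φ (Ioi (y : ℝ)) y := rfl
  rw [h4] at h3
  linarith

lemma lapp_tendsto {φ : ℝ → ℝ} (h : ConvexOn ℝ univ φ) (ρ : Measure ℝ) [IsFiniteMeasure ρ]
    (hρ : Integrable (fun x : ℝ => |x|) ρ) (hi : Integrable φ ρ) :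
    Filter.Tendsto (fun n => ∫ x, lapp φ n x ∂ρ) Filter.atTop (nhds (∫ x, φ x ∂ρ)) := by
  refine tendsto_integral_of_dominated_convergence
    (fun x => |φ x| + (|φ 0| + |derivWithin φ (Ioi (0:ℝ)) 0| * |x|)) ?_ ?_ ?_ ?_
  · intro n
    obtain ⟨K, hK⟩ := lapp_lip h n
    exact hK.continuous.aestronglyMeasurable
  · exact hi.abs.add ((integrable_const _).add (hρ.const_mul _))
  · intro n
    refine Filter.Eventually.of_forall fun x => ?_
    have h1 := lapp_le h n x
    have h2 := le_lapp h n x 0 (by constructor <;> simp)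
    rw [sub_zero] at h2
    have h3 := neg_abs_le (derivWithin φ (Ioi (0:ℝ)) 0 * x)
    rw [abs_mul] at h3
    have h4 := neg_abs_le (φ 0)
    have h5 := le_abs_self (φ x)
    have h6 := abs_nonneg (φ x)
    have h7 := abs_nonneg (φ 0)
    have h8 : 0 ≤ |derivWithin φ (Ioi (0:ℝ)) 0| * |x| := by positivity
    rw [Real.norm_eq_abs, abs_le]
    constructor <;> linarith
  · refine Filter.Eventually.of_forall fun x => ?_
    obtain ⟨N, hN⟩ := exists_nat_ge |x|
    refine tendsto_const_nhds.congr' ?_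
    filter_upwards [Filter.eventually_ge_atTop N] with n hn
    refine (lapp_eq h n x ?_).symm
    have : (N : ℝ) ≤ n := by exact_mod_cast hn
    exact abs_le.1 (hN.trans this)

lemma part1 (m : ℕ) (hm : 0 < m) (μ : Fin m → Measure ℝ) [∀ i, IsFiniteMeasure (μ i)]
    (hmass : ∀ i j, μ i Set.univ = μ j Set.univ)
    (hint : ∀ l, Integrable (fun x : ℝ => |x|) (μ l))
    (hF : ∀ i j, ∀ x : ℝ, 0 ≤ fconv (fun t => distFun (μ i) t - distFun (μ j) t)
      (fun t => distFun (μ i) t - distFun (μ j) t) x) :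
    ConvexOrder (convList (List.ofFn μ)) ((m : ENNReal)⁻¹ • ∑ i : Fin m, convPow (μ i) m) := by
  intro φ h hi1 hi2
  obtain ⟨g1, g2, -⟩ := convList_good μ hint (List.finRange m)
  rw [← List.ofFn_eq_map] at g1 g2
  have hm' : (m : ENNReal) ≠ 0 := by exact_mod_cast hm.ne'
  have hmr : (0 : ℝ) < m := by exact_mod_cast hm
  have hi2' : Integrable φ (∑ i : Fin m, convPow (μ i) m) :=
    (integrable_smul_measure (ENNReal.inv_ne_zero.2 (ENNReal.natCast_ne_top m))
      (ENNReal.inv_ne_top.2 hm')).1 hi2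
  rw [integrable_finsetSum_measure] at hi2'
  rw [integral_smul_measure, integral_finsetSum_measure hi2', ENNReal.toReal_inv,
    ENNReal.toReal_natCast, smul_eq_mul, le_inv_mul_iff₀ hmr]
  have t1 := (lapp_tendsto h _ g2 hi1).const_mul (m : ℝ)
  have t2 : Filter.Tendsto (fun n => ∑ i, ∫ x, lapp φ n x ∂(convPow (μ i) m)) Filter.atTop
      (nhds (∑ i, ∫ x, φ x ∂(convPow (μ i) m))) := by
    refine tendsto_finsetSum _ fun i hi => ?_
    obtain ⟨g1, g2, -⟩ := convPow_good (μ i) (hint i) m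
    exact lapp_tendsto h _ g2 (hi2' i hi)
  refine le_of_tendsto_of_tendsto' t1 t2 fun n => ?_
  obtain ⟨K, hK⟩ := lapp_lip h n
  exact lip_case m hm μ hmass hint hF _ (lapp_convex h n) hK


/-- Corollary: μ₁∗⋯∗μ_m ≼ₓ (1/m)[μ₁^{∗m} + ⋯ + μ_m^{∗m}] under the
convolution-positivity assumptions; in particular the Raşa-type inequality for
binomial distributions B(n,xᵢ) holds for every convex φ. -/
theorem stmt16 (m : ℕ) (hm : 0 < m) (μ : Fin m → Measure ℝ) [∀ i, IsFiniteMeasure (μ i)]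
    (hmass : ∀ i j, μ i Set.univ = μ j Set.univ)
    (hint : ∀ l, Integrable (fun x : ℝ => |x|) (μ l))
    (hF : ∀ i j, ∀ x : ℝ, 0 ≤ fconv (fun t => distFun (μ i) t - distFun (μ j) t)
      (fun t => distFun (μ i) t - distFun (μ j) t) x) :
    ConvexOrder (convList (List.ofFn μ)) ((m : ENNReal)⁻¹ • ∑ i : Fin m, convPow (μ i) m) ∧
      ∀ n : ℕ, 0 < n → ∀ x : Fin m → ℝ, (∀ i, x i ∈ Set.Icc (0 : ℝ) 1) →
        ∀ φ : ℝ → ℝ, ConvexOn ℝ Set.univ φ →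
          0 ≤ ∑ t : Fin m → Fin (n + 1),
            ((∑ j : Fin m, ∏ l : Fin m, bern n (t l) (x j)) -
                (m : ℝ) * ∏ l : Fin m, bern n (t l) (x l)) *
              φ ((∑ l : Fin m, ((t l : ℕ) : ℝ)) / (m * n)) := by
  exact ⟨part1 m hm μ hmass hint hF, fun n _ x hx φ hφ => part2 m hm n x hx φ hφ⟩
end

section
/- Let P(x,y) = (1/2)x³y + (1/2)xy³ and Q(x,y) = (1/8)x⁴ + (3/4)x²y² + (1/8)y⁴, let μ = δ₀ and ν = (1/2)δ₀ + (1/2)δ₁, and let P(μ,ν), Q(μ,ν) be the corresponding convolution polynomials of measures. Then P(μ,ν) = (5/16)δ₀ + (7/16)δ₁ + (3/16)δ₂ + (1/16)δ₃ and Q(μ,ν) = (41/128)δ₀ + (52/128)δ₁ + (30/128)δ₂ + (4/128)δ₃ + (1/128)δ₄, and for the convex function φ(x) = max(0, x−2) one has ∫φ dP(μ,ν) = 1/16 > 6/128 = ∫φ dQ(μ,ν); in particular, P(μ,ν) ≼_cx Q(μ,ν) does NOT hold, even though (F_μ − F_ν)*(F_μ − F_ν) ≥ 0. -/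
open MeasureTheory Set

/-- The measure μ = δ₀ of the counterexample. -/
noncomputable def cexμ : Measure ℝ := Measure.dirac 0

/-- The measure ν = ½δ₀ + ½δ₁ of the counterexample. -/
noncomputable def cexν : Measure ℝ :=
  (2 : ENNReal)⁻¹ • Measure.dirac (0 : ℝ) + (2 : ENNReal)⁻¹ • Measure.dirac (1 : ℝ)

/-- P(μ,ν) = ½ μ^{∗3}∗ν + ½ μ∗ν^{∗3}. -/
noncomputable def cexP : Measure ℝ :=
  (2 : ENNReal)⁻¹ • Measure.conv (convPow cexμ 3) (convPow cexν 1) +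
    (2 : ENNReal)⁻¹ • Measure.conv (convPow cexμ 1) (convPow cexν 3)

/-- Q(μ,ν) = ⅛ μ^{∗4} + ¾ μ^{∗2}∗ν^{∗2} + ⅛ ν^{∗4}. -/
noncomputable def cexQ : Measure ℝ :=
  (8 : ENNReal)⁻¹ • convPow cexμ 4 +
    ENNReal.ofReal (3 / 4) • Measure.conv (convPow cexμ 2) (convPow cexν 2) +
    (8 : ENNReal)⁻¹ • convPow cexν 4

/-- Finitely supported measure on 0,...,4 with given weights. -/
noncomputable def auxW (a b c d e : NNReal) : Measure ℝ :=
  a • Measure.dirac (0 : ℝ) + b • Measure.dirac (1 : ℝ) + c • Measure.dirac (2 : ℝ) +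
    d • Measure.dirac (3 : ℝ) + e • Measure.dirac (4 : ℝ)

instance auxW_fin (a b c d e : NNReal) : IsFiniteMeasure (auxW a b c d e) := by
  unfold auxW; infer_instance

lemma aux_half (m : Measure ℝ) : (2 : ENNReal)⁻¹ • m = (2⁻¹ : NNReal) • m := by
  have h : ((2⁻¹ : NNReal) : ENNReal) = 2⁻¹ := by
    rw [ENNReal.coe_inv (by norm_num)]; rfl
  rw [← h]; rfl

lemma aux_eighth (m : Measure ℝ) : (8 : ENNReal)⁻¹ • m = (8⁻¹ : NNReal) • m := by
  have h : ((8⁻¹ : NNReal) : ENNReal) = 8⁻¹ := by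
    rw [ENNReal.coe_inv (by norm_num)]; rfl
  rw [← h]; rfl

lemma aux_ofReal (r : ℝ) (q : NNReal) (h : r = q) (m : Measure ℝ) :
    ENNReal.ofReal r • m = q • m := by
  subst h
  rw [ENNReal.ofReal_coe_nnreal]; rfl

instance cexν_fin : IsFiniteMeasure cexν := by
  unfold cexν
  rw [aux_half, aux_half]; infer_instance

lemma aux_conv_nu (m : Measure ℝ) [SFinite m] : Measure.conv m cexν = (2⁻¹ : NNReal) • m
    + (2⁻¹ : NNReal) • m.map (· + 1) := by
  unfold cexν
  rw [Measure.conv_add, Measure.conv_smul_right, Measure.conv_smul_right, Measure.conv_dirac_zero,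
    Measure.conv_dirac, aux_half, aux_half]

lemma auxW_conv (a b c d : NNReal) : Measure.conv (auxW a b c d 0) cexν =
    auxW (a / 2) ((a + b) / 2) ((b + c) / 2) ((c + d) / 2) (d / 2) := by
  have hm : Measurable (fun x : ℝ => x + 1) := by fun_prop
  rw [aux_conv_nu]
  unfold auxW
  simp only [Measure.map_add _ _ hm, Measure.map_smul, Measure.map_dirac' hm]
  norm_num
  simp only [div_eq_inv_mul]
  module

lemma auxW_zero : Measure.dirac (0 : ℝ) = auxW 1 0 0 0 0 := by
  simp [auxW]

lemma aux_nu1 : convPow cexν 1 = auxW (1 / 2) (1 / 2) 0 0 0 := by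
  simp only [convPow]
  rw [auxW_zero, auxW_conv]; norm_num

lemma aux_nu2 : convPow cexν 2 = auxW (1 / 4) (1 / 2) (1 / 4) 0 0 := by
  rw [convPow, aux_nu1, auxW_conv]; norm_num

lemma aux_nu3 : convPow cexν 3 = auxW (1 / 8) (3 / 8) (3 / 8) (1 / 8) 0 := by
  rw [convPow, aux_nu2, auxW_conv]; norm_num

lemma aux_nu4 : convPow cexν 4 = auxW (1 / 16) (1 / 4) (3 / 8) (1 / 4) (1 / 16) := by
  rw [convPow, aux_nu3, auxW_conv]; norm_num

lemma aux_mu (n : ℕ) : convPow cexμ n = Measure.dirac 0 := by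
  induction n with
  | zero => rfl
  | succ k ih => rw [convPow, ih, cexμ, Measure.conv_dirac_zero]

lemma auxW_smul (q a b c d e : NNReal) :
    q • auxW a b c d e = auxW (q * a) (q * b) (q * c) (q * d) (q * e) := by
  unfold auxW; module

lemma auxW_add (a b c d e a2 b2 c2 d2 e2 : NNReal) :
    auxW a b c d e + auxW a2 b2 c2 d2 e2 =
      auxW (a + a2) (b + b2) (c + c2) (d + d2) (e + e2) := by
  unfold auxW; module

lemma aux_P : cexP = auxW (5 / 16) (7 / 16) (3 / 16) (1 / 16) 0 := by
  unfold cexP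
  rw [aux_nu1, aux_nu3, aux_mu, aux_mu, Measure.dirac_zero_conv, Measure.dirac_zero_conv,
    aux_half, aux_half, auxW_smul, auxW_smul, auxW_add]
  norm_num

lemma aux_Q : cexQ = auxW (41 / 128) (52 / 128) (30 / 128) (4 / 128) (1 / 128) := by
  unfold cexQ
  rw [aux_nu2, aux_nu4, aux_mu, aux_mu, Measure.dirac_zero_conv, aux_eighth, aux_eighth,
    aux_ofReal (3 / 4) (3 / 4) (by norm_num), auxW_zero, auxW_smul, auxW_smul, auxW_smul,
    auxW_add, auxW_add]
  norm_num

lemma auxW_integrable (f : ℝ → ℝ) (a b c d e : NNReal) :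
    Integrable f (auxW a b c d e) := by
  have h : ∀ (q : NNReal) (x : ℝ), Integrable f (q • Measure.dirac x) := fun q x =>
    (integrable_dirac (by simp)).smul_measure_nnreal
  unfold auxW
  exact ((((h _ _).add_measure (h _ _)).add_measure (h _ _)).add_measure (h _ _)).add_measure
    (h _ _)

lemma auxW_integral (f : ℝ → ℝ) (a b c d e : NNReal) :
    ∫ x, f x ∂(auxW a b c d e) = a * f 0 + b * f 1 + c * f 2 + d * f 3 + e * f 4 := by
  have h : ∀ (q : NNReal) (x : ℝ), Integrable f (q • Measure.dirac x) := fun q x =>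
    (integrable_dirac (by simp)).smul_measure_nnreal
  have h1 := (h a 0).add_measure (h b 1)
  have h2 := h1.add_measure (h c 2)
  have h3 := h2.add_measure (h d 3)
  unfold auxW
  rw [integral_add_measure h3 (h _ _), integral_add_measure h2 (h _ _),
    integral_add_measure h1 (h _ _), integral_add_measure (h _ _) (h _ _)]
  simp only [integral_smul_nnreal_measure, integral_dirac, NNReal.smul_def, smul_eq_mul]

lemma aux_dist (t : ℝ) : 0 ≤ distFun cexμ t - distFun cexν t := by
  have h1 : cexν (Iic t) ≤ cexμ (Iic t) := by
    unfold cexν cexμ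
    simp only [Measure.add_apply, Measure.smul_apply, smul_eq_mul,
      Measure.dirac_apply' _ (measurableSet_Iic (a := t))]
    have h2 : (Iic t).indicator (1 : ℝ → ENNReal) 1 ≤ (Iic t).indicator (1 : ℝ → ENNReal) 0 := by
      by_cases h : (1 : ℝ) ≤ t
      · have h0 : (0 : ℝ) ≤ t := by linarith
        simp [h, h0]
      · simp [h]
    calc _ ≤ (2 : ENNReal)⁻¹ * (Iic t).indicator (1 : ℝ → ENNReal) 0
          + (2 : ENNReal)⁻¹ * (Iic t).indicator (1 : ℝ → ENNReal) 0 := by gcongr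
      _ = _ := by rw [← add_mul, ENNReal.inv_two_add_inv_two, one_mul]
  have h3 : cexμ (Iic t) ≠ ⊤ := by unfold cexμ; exact measure_ne_top _ _
  exact sub_nonneg.2 (ENNReal.toReal_mono h3 h1)

/-- Example: explicit computation of the convolution polynomials
P(μ,ν) and Q(μ,ν) for μ = δ₀, ν = ½δ₀ + ½δ₁, showing that P(μ,ν) ≼ₓ Q(μ,ν) fails
even though (F−G)∗(F−G) ≥ 0. -/
theorem stmt17 :
    cexP = ENNReal.ofReal (5 / 16) • Measure.dirac (0 : ℝ) +
        ENNReal.ofReal (7 / 16) • Measure.dirac (1 : ℝ) +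
        ENNReal.ofReal (3 / 16) • Measure.dirac (2 : ℝ) +
        ENNReal.ofReal (1 / 16) • Measure.dirac (3 : ℝ) ∧
      cexQ = ENNReal.ofReal (41 / 128) • Measure.dirac (0 : ℝ) +
          ENNReal.ofReal (52 / 128) • Measure.dirac (1 : ℝ) +
          ENNReal.ofReal (30 / 128) • Measure.dirac (2 : ℝ) +
          ENNReal.ofReal (4 / 128) • Measure.dirac (3 : ℝ) +
          ENNReal.ofReal (1 / 128) • Measure.dirac (4 : ℝ) ∧
      (∫ x, max 0 (x - 2) ∂cexP) = 1 / 16 ∧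
      (∫ x, max 0 (x - 2) ∂cexQ) = 6 / 128 ∧
      (∫ x, max 0 (x - 2) ∂cexQ) < ∫ x, max 0 (x - 2) ∂cexP ∧
      ¬ ConvexOrder cexP cexQ ∧
      ∀ A : ℝ, 0 ≤ fconv (fun t => distFun cexμ t - distFun cexν t)
        (fun t => distFun cexμ t - distFun cexν t) A := by
  have hP : (∫ x, max 0 (x - 2) ∂cexP) = 1 / 16 := by
    rw [aux_P, auxW_integral]; norm_num
  have hQ : (∫ x, max 0 (x - 2) ∂cexQ) = 6 / 128 := by
    rw [aux_Q, auxW_integral]; norm_num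
  have hlt : (∫ x, max 0 (x - 2) ∂cexQ) < ∫ x, max 0 (x - 2) ∂cexP := by
    rw [hP, hQ]; norm_num
  refine ⟨?_, ?_, hP, hQ, hlt, ?_, ?_⟩
  · rw [aux_P, auxW, aux_ofReal (5 / 16) (5 / 16) (by norm_num),
      aux_ofReal (7 / 16) (7 / 16) (by norm_num), aux_ofReal (3 / 16) (3 / 16) (by norm_num),
      aux_ofReal (1 / 16) (1 / 16) (by norm_num), zero_smul, add_zero]
  · rw [aux_Q, auxW, aux_ofReal (41 / 128) (41 / 128) (by norm_num),
      aux_ofReal (52 / 128) (52 / 128) (by norm_num),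
      aux_ofReal (30 / 128) (30 / 128) (by norm_num),
      aux_ofReal (4 / 128) (4 / 128) (by norm_num),
      aux_ofReal (1 / 128) (1 / 128) (by norm_num)]
  · intro h
    refine absurd (h (fun x => max 0 (x - 2)) ?_ ?_ ?_) (not_le.2 hlt)
    · exact (convexOn_const 0 convex_univ).sup
        ((convexOn_id convex_univ).sub (concaveOn_const 2 convex_univ))
    · rw [aux_P]; exact auxW_integrable _ _ _ _ _ _
    · rw [aux_Q]; exact auxW_integrable _ _ _ _ _ _
  · intro A
    exact integral_nonneg fun t => mul_nonneg (aux_dist t) (aux_dist (A - t))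
end

section
/- Let μ and ν be probability distributions on ℝ with finite first moments such that μ ≤_st ν or ν ≤_st μ. Let g: ℝ² → ℝ be a convex function satisfying g(x₁,x₂) + g(y₁,y₂) ≥ g(x₁,y₂) + g(y₁,x₂) for all x₁, x₂, y₁, y₂ ∈ ℝ with (y₁−x₁)(y₂−x₂) > 0, and assume all the expectations below exist. Then ∫ g d(μ⊗μ) + ∫ g d(ν⊗ν) ≥ ∫ g d(μ⊗ν) + ∫ g d(ν⊗μ); equivalently, for independent random variables X₁, X₂ ∼ μ and Y₁, Y₂ ∼ ν: E g(X₁,X₂) + E g(Y₁,Y₂) ≥ E g(X,Y) + E g(Y,X) where X ∼ μ and Y ∼ ν are independent. -/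
open MeasureTheory Set

open ProbabilityTheory Filter Topology in
/-- Quantile function of a probability measure. -/
lemma exists_quantile (μ : Measure ℝ) [IsProbabilityMeasure μ] :
    ∃ q : ℝ → ℝ, Measurable q ∧ (∀ u ∈ Ioo (0:ℝ) 1, ∀ x, q u ≤ x ↔ u ≤ distFun μ x) ∧
      (volume.restrict (Ioo (0:ℝ) 1)).map q = μ := by
  classical
  have hF : ∀ x, distFun μ x = cdf μ x := fun x => (cdf_eq_real μ x).symm
  let q : ℝ → ℝ := fun u => if u ∈ Ioo (0:ℝ) 1 then sInf {x | u ≤ cdf μ x} else 0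
  have hq : ∀ u ∈ Ioo (0:ℝ) 1, ∀ x, q u ≤ x ↔ u ≤ distFun μ x := by
    intro u hu x
    have hbdd : BddBelow {x | u ≤ cdf μ x} := by
      obtain ⟨b, hb⟩ := ((tendsto_cdf_atBot μ).eventually (gt_mem_nhds hu.1)).exists
      refine ⟨b, fun y hy => ?_⟩
      by_contra! h
      exact absurd (hy.out.trans (monotone_cdf μ h.le)) (not_le.2 hb)
    have hne : {x | u ≤ cdf μ x}.Nonempty := by
      obtain ⟨b, hb⟩ := ((tendsto_cdf_atTop μ).eventually (lt_mem_nhds hu.2)).exists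
      exact ⟨b, hb.le⟩
    simp only [q, if_pos hu, hF]
    constructor
    · intro h
      have hr : Tendsto (cdf μ) (𝓝[>] x) (𝓝 (cdf μ x)) :=
        ((cdf μ).right_continuous x).tendsto.mono_left (nhdsWithin_mono _ Ioi_subset_Ici_self)
      refine ge_of_tendsto hr ?_
      filter_upwards [self_mem_nhdsWithin] with y hy
      obtain ⟨z, hz, hzy⟩ := exists_lt_of_csInf_lt hne (lt_of_le_of_lt h hy)
      exact hz.out.trans (monotone_cdf μ hzy.le)
    · intro h
      exact csInf_le hbdd h
  have hqm : Measurable q := by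
    refine measurable_of_Iic fun x => ?_
    have : q ⁻¹' Iic x = (Ioo (0:ℝ) 1 ∩ Iic (distFun μ x)) ∪ ((Ioo (0:ℝ) 1)ᶜ ∩ {_u | 0 ≤ x}) := by
      ext u
      by_cases hu : u ∈ Ioo (0:ℝ) 1
      · have := hq u hu x
        simp only [mem_preimage, mem_Iic, mem_union, mem_inter_iff, hu, mem_compl_iff, this]
        simp
      · have : q u = 0 := if_neg hu
        simp only [mem_preimage, mem_Iic, mem_union, mem_inter_iff, hu, mem_compl_iff, this]
        simp
    rw [this]
    exact (measurableSet_Ioo.inter measurableSet_Iic).union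
      (measurableSet_Ioo.compl.inter (MeasurableSet.const _))
  refine ⟨q, hqm, hq, ?_⟩
  symm
  refine Measure.ext_of_Iic _ _ fun x => ?_
  rw [Measure.map_apply hqm measurableSet_Iic,
    Measure.restrict_apply (hqm measurableSet_Iic), ← ofReal_cdf μ x]
  have h0 := cdf_nonneg μ x
  have h1 := cdf_le_one μ x
  have e : q ⁻¹' Iic x ∩ Ioo 0 1 = Ioc 0 (cdf μ x) ∩ Iio 1 := by
    ext u
    simp only [mem_inter_iff, mem_preimage, mem_Iic, mem_Ioo, mem_Ioc, mem_Iio]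
    constructor
    · rintro ⟨h, hu⟩
      exact ⟨⟨hu.1, by rw [← hF]; exact (hq u hu x).1 h⟩, hu.2⟩
    · rintro ⟨⟨a, b⟩, c⟩
      exact ⟨(hq u ⟨a, c⟩ x).2 (by rw [hF]; exact b), a, c⟩
  rw [e]
  apply le_antisymm
  · calc ENNReal.ofReal (cdf μ x) = volume (Ioo 0 (cdf μ x)) := by simp
      _ ≤ volume (Ioc 0 (cdf μ x) ∩ Iio 1) :=
        measure_mono fun u hu => ⟨⟨hu.1, hu.2.le⟩, hu.2.trans_le h1⟩
  · calc _ ≤ volume (Ioc 0 (cdf μ x)) := measure_mono inter_subset_left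
      _ = _ := by simp

lemma stmt18_aux (μ ν : Measure ℝ) [IsProbabilityMeasure μ] [IsProbabilityMeasure ν]
    (hst : StochOrder μ ν)
    (g : ℝ × ℝ → ℝ)
    (hsm : ∀ x₁ x₂ y₁ y₂ : ℝ, 0 < (y₁ - x₁) * (y₂ - x₂) →
      g (x₁, y₂) + g (y₁, x₂) ≤ g (x₁, x₂) + g (y₁, y₂))
    (h1 : Integrable g (μ.prod μ)) (h2 : Integrable g (ν.prod ν))
    (h3 : Integrable g (μ.prod ν)) (h4 : Integrable g (ν.prod μ)) :
    (∫ p, g p ∂(μ.prod ν)) + (∫ p, g p ∂(ν.prod μ)) ≤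
      (∫ p, g p ∂(μ.prod μ)) + ∫ p, g p ∂(ν.prod ν) := by
  obtain ⟨q, hqm, hq, hqμ⟩ := exists_quantile μ
  obtain ⟨r, hrm, hr, hrν⟩ := exists_quantile ν
  set P : Measure ℝ := volume.restrict (Ioo (0:ℝ) 1) with hP
  have key : ∀ (a b : ℝ → ℝ) (α β : Measure ℝ), Measurable a → Measurable b →
      P.map a = α → P.map b = β → Integrable g (α.prod β) →
      Integrable (fun p : ℝ × ℝ => g (a p.1, b p.2)) (P.prod P) ∧
      ∫ p, g p ∂(α.prod β) = ∫ p, g (a p.1, b p.2) ∂(P.prod P) := by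
    rintro a b α β ha hb rfl rfl hi
    rw [Measure.map_prod_map _ _ ha hb] at hi ⊢
    have hab : AEMeasurable (Prod.map a b) (P.prod P) := (ha.prodMap hb).aemeasurable
    exact ⟨(integrable_map_measure hi.aestronglyMeasurable hab).1 hi,
      integral_map hab hi.aestronglyMeasurable⟩
  obtain ⟨i1, e1⟩ := key q q μ μ hqm hqm hqμ hqμ h1
  obtain ⟨i2, e2⟩ := key r r ν ν hrm hrm hrν hrν h2
  obtain ⟨i3, e3⟩ := key q r μ ν hqm hrm hqμ hrν h3
  obtain ⟨i4, e4⟩ := key r q ν μ hrm hqm hrν hqμ h4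
  rw [e1, e2, e3, e4, ← integral_add i1 i2, ← integral_add i3 i4]
  refine integral_mono_ae (i3.add i4) (i1.add i2) ?_
  have hle : ∀ u ∈ Ioo (0:ℝ) 1, q u ≤ r u := fun u hu =>
    (hq u hu _).2 (((hr u hu _).1 le_rfl).trans (hst.2 _))
  rw [hP, Measure.prod_restrict]
  filter_upwards [ae_restrict_mem (measurableSet_Ioo.prod measurableSet_Ioo)] with p hp
  rcases (hle _ hp.1).eq_or_lt with h | h
  · rw [h]; linarith
  rcases (hle _ hp.2).eq_or_lt with h' | h'
  · rw [h']
  exact hsm _ _ _ _ (mul_pos (sub_pos.2 h) (sub_pos.2 h'))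

/-- Theorem 4.5: for stochastically comparable probability
distributions μ, ν and a convex function g satisfying the supermodularity-type
condition, one has ∫g d(μ⊗ν) + ∫g d(ν⊗μ) ≤ ∫g d(μ⊗μ) + ∫g d(ν⊗ν). -/
theorem stmt18 (μ ν : Measure ℝ) [IsProbabilityMeasure μ] [IsProbabilityMeasure ν]
    (hμ1 : Integrable (fun x : ℝ => |x|) μ) (hν1 : Integrable (fun x : ℝ => |x|) ν)
    (hst : StochOrder μ ν ∨ StochOrder ν μ)
    (g : ℝ × ℝ → ℝ) (hg : ConvexOn ℝ Set.univ g)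
    (hsm : ∀ x₁ x₂ y₁ y₂ : ℝ, 0 < (y₁ - x₁) * (y₂ - x₂) →
      g (x₁, y₂) + g (y₁, x₂) ≤ g (x₁, x₂) + g (y₁, y₂))
    (h1 : Integrable g (μ.prod μ)) (h2 : Integrable g (ν.prod ν))
    (h3 : Integrable g (μ.prod ν)) (h4 : Integrable g (ν.prod μ)) :
    (∫ p, g p ∂(μ.prod ν)) + (∫ p, g p ∂(ν.prod μ)) ≤
      (∫ p, g p ∂(μ.prod μ)) + ∫ p, g p ∂(ν.prod ν) := by
  rcases hst with hst | hst
  · exact stmt18_aux μ ν hst g hsm h1 h2 h3 h4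
  · have := stmt18_aux ν μ hst g hsm h2 h1 h4 h3
    linarith
end

section
/- Let n ∈ ℕ, let a_{n,k}(x) = C(n+k, k)·(1−x)^{n+1}·x^k for x ∈ [0,1), and let x, y ∈ [0,1) with x ≠ y. Then Σ_{i=0}^∞ Σ_{j=0}^∞ ( a_{n,i}(x) a_{n,j}(x) + a_{n,i}(y) a_{n,j}(y) − 2 a_{n,i}(x) a_{n,j}(y) ) · (i+j)/(2n+i+j) < 0. In particular, the Gavrea inequality Σ_{i,j} ( a_{n,i}(x) a_{n,j}(x) + a_{n,i}(y) a_{n,j}(y) − 2 a_{n,i}(x) a_{n,j}(y) ) φ((i+j)/(2n+i+j)) ≥ 0 fails for the convex function φ(u) = u. -/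
open MeasureTheory Set

/-- The negative binomial weights a_{n,k}(x) = C(n+k,k)(1−x)^{n+1}x^k. -/
noncomputable def negbin (n k : ℕ) (x : ℝ) : ℝ :=
  ((n + k).choose k : ℝ) * (1 - x) ^ (n + 1) * x ^ k


lemma hs_conv {ι : Type} {f g : ι → ℝ} {a b : ℝ} (h : HasSum g b) (hf : ∀ i, f i = g i)
    (hab : a = b) : HasSum f a := by
  obtain rfl : f = g := funext hf
  rw [hab]; exact h

lemma negbin_hasSum (n : ℕ) (x : ℝ) (hx : x ∈ Set.Ico (0 : ℝ) 1) (t : ℝ)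
    (ht : t ∈ Set.Icc (0 : ℝ) 1) :
    HasSum (fun k => negbin n k x * t ^ k) (((1 - x) / (1 - x * t)) ^ (n + 1)) := by
  obtain ⟨hx0, hx1⟩ := hx
  obtain ⟨ht0, ht1⟩ := ht
  have h0 : 0 ≤ x * t := mul_nonneg hx0 ht0
  have h1 : x * t < 1 := by nlinarith
  have h := (hasSum_choose_mul_geometric_of_norm_lt_one n (r := x * t)
    (by rw [Real.norm_eq_abs, abs_of_nonneg h0]; exact h1)).mul_left ((1 - x) ^ (n + 1))
  refine hs_conv h ?_ ?_
  · intro k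
    have : (n + k).choose k = (k + n).choose n := by
      rw [add_comm, Nat.choose_symm_add]
    unfold negbin
    rw [this, mul_pow]
    ring
  · rw [div_pow]; ring

/-- coefficients of the double series -/
noncomputable def cco (n : ℕ) (x y : ℝ) (p : ℕ × ℕ) : ℝ :=
  negbin n p.1 x * negbin n p.2 x + negbin n p.1 y * negbin n p.2 y -
          2 * negbin n p.1 x * negbin n p.2 y

lemma negbin_nonneg (n k : ℕ) (x : ℝ) (hx : x ∈ Set.Ico (0 : ℝ) 1) : 0 ≤ negbin n k x := by
  obtain ⟨hx0, hx1⟩ := hx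
  have : 0 ≤ 1 - x := by linarith
  unfold negbin
  positivity

lemma pair_hasSum (n : ℕ) (x y : ℝ) (hx : x ∈ Set.Ico (0 : ℝ) 1)
    (hy : y ∈ Set.Ico (0 : ℝ) 1) (t : ℝ) (ht : t ∈ Set.Icc (0 : ℝ) 1) :
    HasSum (fun p : ℕ × ℕ => (negbin n p.1 x * t ^ p.1) * (negbin n p.2 y * t ^ p.2))
      (((1 - x) / (1 - x * t)) ^ (n + 1) * ((1 - y) / (1 - y * t)) ^ (n + 1)) := by
  have h1 := negbin_hasSum n x hx t ht
  have h2 := negbin_hasSum n y hy t ht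
  refine h1.mul h2 ?_
  exact h1.summable.mul_of_nonneg h2.summable
    (fun k => mul_nonneg (negbin_nonneg n k x hx) (pow_nonneg ht.1 _))
    (fun k => mul_nonneg (negbin_nonneg n k y hy) (pow_nonneg ht.1 _))

lemma cco_hasSum (n : ℕ) (x y : ℝ) (hx : x ∈ Set.Ico (0 : ℝ) 1)
    (hy : y ∈ Set.Ico (0 : ℝ) 1) (t : ℝ) (ht : t ∈ Set.Icc (0 : ℝ) 1) :
    HasSum (fun p : ℕ × ℕ => cco n x y p * t ^ (p.1 + p.2))
      ((((1 - x) / (1 - x * t)) ^ (n + 1) - ((1 - y) / (1 - y * t)) ^ (n + 1)) ^ 2) := by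
  have h := ((pair_hasSum n x x hx hx t ht).add (pair_hasSum n y y hy hy t ht)).sub
    ((pair_hasSum n x y hx hy t ht).mul_left 2)
  refine hs_conv h ?_ ?_
  · intro p
    unfold cco
    ring
  · ring

lemma cco_hasSum_zero (n : ℕ) (x y : ℝ) (hx : x ∈ Set.Ico (0 : ℝ) 1)
    (hy : y ∈ Set.Ico (0 : ℝ) 1) : HasSum (cco n x y) 0 := by
  have h := cco_hasSum n x y hx hy 1 (by simp)
  have e1 : 1 - x ≠ 0 := by have := hx.2; intro h; linarith
  have e2 : 1 - y ≠ 0 := by have := hy.2; intro h; linarith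
  simpa [div_self e1, div_self e2] using h

lemma main_pos (n : ℕ) (hn : 0 < n) (x y : ℝ) (hx : x ∈ Set.Ico (0 : ℝ) 1)
    (hy : y ∈ Set.Ico (0 : ℝ) 1) (hxy : x ≠ y) :
    ∃ I : ℝ, 0 < I ∧ HasSum (fun p : ℕ × ℕ => cco n x y p *
      (2 * n / (2 * n + p.1 + p.2))) I := by
  let G : ℝ → ℝ := fun t => (((1 - x) / (1 - x * t)) ^ (n + 1) -
    ((1 - y) / (1 - y * t)) ^ (n + 1)) ^ 2 * (2 * n * t ^ (2 * n - 1))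
  have hden : ∀ z ∈ Set.Ico (0 : ℝ) 1, ∀ t ∈ Set.Icc (0 : ℝ) 1, 0 < 1 - z * t := by
    rintro z ⟨hz0, hz1⟩ t ⟨ht0, ht1⟩
    nlinarith
  have hn' : (0 : ℝ) < n := by exact_mod_cast hn
  refine ⟨∫ t in (0 : ℝ)..1, G t, ?_, ?_⟩
  · apply intervalIntegral.intervalIntegral_pos_of_pos_on
    · apply ContinuousOn.intervalIntegrable
      rw [uIcc_of_le zero_le_one]
      have hc : ∀ z ∈ Set.Ico (0 : ℝ) 1,
          ContinuousOn (fun t : ℝ => (1 - z) / (1 - z * t)) (Set.Icc 0 1) := by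
        intro z hz
        apply ContinuousOn.div (by fun_prop) (by fun_prop)
        intro t ht
        exact (hden z hz t ht).ne'
      have h1 := hc x hx
      have h2 := hc y hy
      exact (((h1.pow _).sub (h2.pow _)).pow 2).mul (by fun_prop)
    · intro t ht
      have ht' : t ∈ Set.Icc (0 : ℝ) 1 := ⟨ht.1.le, ht.2.le⟩
      have d1 := hden x hx t ht'
      have d2 := hden y hy t ht'
      have := ht.1
      have n1 : 0 < 1 - x := by linarith [hx.2]
      have n2 : 0 < 1 - y := by linarith [hy.2]
      refine mul_pos (sq_pos_of_ne_zero ?_) (by positivity)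
      intro h
      have h := sub_eq_zero.mp h
      rw [pow_left_inj₀ (by positivity) (by positivity) (by omega), div_eq_div_iff d1.ne' d2.ne'] at h
      have h3 : (y - x) * (1 - t) = 0 := by linarith
      rcases mul_eq_zero.mp h3 with h | h
      · exact hxy (by linarith)
      · linarith [ht.2]
    · exact zero_lt_one
  · have key := intervalIntegral.hasSum_integral_of_dominated_convergence (μ := volume)
      (a := (0 : ℝ)) (b := 1) (f := G)
      (F := fun (p : ℕ × ℕ) t => cco n x y p * t ^ (p.1 + p.2) * (2 * n * t ^ (2 * n - 1)))
      (fun p _ => |cco n x y p| * (2 * n)) ?_ ?_ ?_ ?_ ?_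
    · refine hs_conv key ?_ rfl
      intro p
      have : ∀ t : ℝ, cco n x y p * t ^ (p.1 + p.2) * (2 * n * t ^ (2 * n - 1)) =
          cco n x y p * (2 * n) * t ^ (p.1 + p.2 + (2 * n - 1)) := by
        intro t; rw [pow_add]; ring
      simp only [this]
      rw [intervalIntegral.integral_const_mul, integral_pow]
      have e : ((p.1 + p.2 + (2 * n - 1) : ℕ) : ℝ) + 1 = 2 * n + p.1 + p.2 := by
        have : p.1 + p.2 + (2 * n - 1) + 1 = 2 * n + p.1 + p.2 := by omega
        exact_mod_cast this
      rw [e]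
      simp
      ring
    · intro p
      apply Continuous.aestronglyMeasurable
      fun_prop
    · intro p
      refine Filter.Eventually.of_forall fun t ht => ?_
      rw [uIoc_of_le zero_le_one] at ht
      have h0 := ht.1.le
      have p1 : t ^ (p.1 + p.2) ≤ 1 := pow_le_one₀ h0 ht.2
      have p2 : t ^ (2 * n - 1) ≤ 1 := pow_le_one₀ h0 ht.2
      rw [norm_mul, norm_mul, Real.norm_eq_abs, Real.norm_of_nonneg (by positivity),
        Real.norm_of_nonneg (by positivity)]
      have q1 : |cco n x y p| * t ^ (p.1 + p.2) ≤ |cco n x y p| :=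
        mul_le_of_le_one_right (abs_nonneg _) p1
      have q2 : 2 * (n : ℝ) * t ^ (2 * n - 1) ≤ 2 * n :=
        mul_le_of_le_one_right (by positivity) p2
      exact mul_le_mul q1 q2 (by positivity) (abs_nonneg _)
    · exact Filter.Eventually.of_forall fun t _ =>
        (cco_hasSum_zero n x y hx hy).summable.abs.mul_right _
    · exact intervalIntegrable_const
    · refine Filter.Eventually.of_forall fun t ht => ?_
      rw [uIoc_of_le zero_le_one] at ht
      exact (cco_hasSum n x y hx hy t ⟨ht.1.le, ht.2⟩).mul_right _

/-- the Gavrea inequality fails for φ(u) = u: for x ≠ y in [0,1)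
the corresponding double series is strictly negative. -/
theorem stmt19 (n : ℕ) (x y : ℝ) (hx : x ∈ Set.Ico (0 : ℝ) 1)
    (hy : y ∈ Set.Ico (0 : ℝ) 1) (hxy : x ≠ y) :
    ∑' i : ℕ, ∑' j : ℕ,
      (negbin n i x * negbin n j x + negbin n i y * negbin n j y -
          2 * negbin n i x * negbin n j y) *
        (((i : ℝ) + j) / (2 * n + i + j)) < 0 := by
  have hz := cco_hasSum_zero n x y hx hy
  obtain ⟨I, hI, hS⟩ : ∃ I : ℝ, 0 < I ∧ HasSum (fun p : ℕ × ℕ => cco n x y p *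
      (((p.1 : ℝ) + p.2) / (2 * n + p.1 + p.2))) (-I) := by
    rcases Nat.eq_zero_or_pos n with rfl | hn
    · refine ⟨(x - y) ^ 2, sq_pos_of_ne_zero (sub_ne_zero.mpr hxy), ?_⟩
      have h1 := hz.sub (hasSum_ite_eq ((0, 0) : ℕ × ℕ) ((x - y) ^ 2))
      rw [zero_sub] at h1
      refine hs_conv h1 ?_ rfl
      rintro ⟨i, j⟩
      by_cases h : (i, j) = ((0, 0) : ℕ × ℕ)
      · rw [if_pos h]
        obtain ⟨rfl, rfl⟩ := Prod.mk.inj h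
        simp [cco, negbin]
        ring
      · rw [if_neg h]
        have : (i : ℝ) + j ≠ 0 := by
          intro h'
          apply h
          have : i + j = 0 := by exact_mod_cast h'
          ext <;> simp <;> omega
        simp [div_self this]
    · obtain ⟨I, hI, hS⟩ := main_pos n hn x y hx hy hxy
      refine ⟨I, hI, ?_⟩
      have h1 := hz.sub hS
      rw [zero_sub] at h1
      refine hs_conv h1 ?_ rfl
      intro p
      have : (0 : ℝ) < 2 * n + p.1 + p.2 := by positivity
      field_simp
      ring
  have := hS.summable.tsum_prod
  rw [hS.tsum_eq] at this
  unfold cco at this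
  simp only at this
  rw [← this]
  linarith
end
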